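/- Let β ∈ 𝒫_{n,e} with c_{β,p} dividing j, and let V'_{β,1} be the G-submodule of V^{⊗n} generated by a highest weight vector in Z_{β,1} (so V'_{β,1} ≅ V_β, the irreducible G-module of highest weight β, stable under τ^j). Then Tr(Dτ^j, V'_{β,1}) = s_{β{j}}(𝒳_j), the Schur function associated to the j₁d-partition β{j} = (β^{(0)},…,β^{(j₁d−1)}) in the variables 𝒳_j. -/

import Mathlib

/-!
Common framework for formalizing T. Shoji, "Green functions associated to
complex reflection groups, II" (arXiv:math/0105053).

We model:
* `e`-partitions of `n` as functions `ZMod e → Multiset ℕ`;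
* the complex reflection group `W̃ = G(e,1,n)` as the semidirect product
  `(Fin n → Multiplicative (ZMod e)) ⋊ Equiv.Perm (Fin n)`, and
  `W = G(e,p,n)` as the kernel of the mod-`p` sum character;
* the tensor space `V^{⊗n}` concretely via matrices indexed by
  `Fin n → (Σ k : ZMod e, Fin (m k))`;
* symmetric functions in the (finitely many, `m k ≥ n`) variables
  `x_i^{(k)}` in evaluated form, i.e. as functions of an assignment
  `xv : (Σ k : ZMod e, Fin (m k)) → ℂ`.
-/

open scoped BigOperators

attribute [local instance] Classical.propDecidable

namespace GreenII

/-! ## Combinatorics of e-partitions -/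

/-- An `e`-partition of `n`: a tuple of partitions (multisets of positive
integers) indexed by `ZMod e`, with total size `n`. -/
def IsEPartition (e : ℕ) [NeZero e] (n : ℕ) (α : ZMod e → Multiset ℕ) : Prop :=
  (∀ k, ∀ x ∈ α k, 0 < x) ∧ (∑ k : ZMod e, (α k).sum) = n

/-- The shift operator `θ = θ_p`, `θ(α)^{(k)} = α^{(k-d)}`. -/
def theta (e : ℕ) [NeZero e] (d : ℕ) (α : ZMod e → Multiset ℕ) : ZMod e → Multiset ℕ :=
  fun k => α (k - (d : ZMod e))

/-- `c_{α,p}`: the size of the `θ`-orbit of `α`. -/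
noncomputable def csize (e : ℕ) [NeZero e] (d : ℕ) (α : ZMod e → Multiset ℕ) : ℕ :=
  Function.minimalPeriod (theta e d) α

/-- `Δ(α) = ∑_k k · l(α^{(k)})`. -/
def Delta (e : ℕ) [NeZero e] (α : ZMod e → Multiset ℕ) : ℕ :=
  ∑ k : ZMod e, k.val * (α k).card

/-- `l(α) = ∑_k l(α^{(k)})`, the total number of parts. -/
def lenE (e : ℕ) [NeZero e] (α : ZMod e → Multiset ℕ) : ℕ :=
  ∑ k : ZMod e, (α k).card

/-- `α` and `β` lie in the same `θ`-orbit. -/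
def SameOrbit (e : ℕ) [NeZero e] (d : ℕ) (α β : ZMod e → Multiset ℕ) : Prop :=
  ∃ i, (theta e d)^[i] α = β

/-! ## The groups `W̃ = G(e,1,n)` and `W = G(e,p,n)` -/

/-- The "diagonal" part of `G(e,1,n)`. -/
abbrev NC (e n : ℕ) := Fin n → Multiplicative (ZMod e)

/-- The permutation action of `𝔖_n` on the diagonal part. -/
def permAut (e n : ℕ) (x : Equiv.Perm (Fin n)) : NC e n ≃* NC e n where
  toFun f := f ∘ ⇑x.symm
  invFun f := f ∘ ⇑x
  left_inv f := by funext i; simp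
  right_inv f := by funext i; simp
  map_mul' f g := rfl

def permHom (e n : ℕ) : Equiv.Perm (Fin n) →* MulAut (NC e n) where
  toFun x := permAut e n x
  map_one' := rfl
  map_mul' x y := rfl

/-- `W̃ = G(e,1,n) ≅ (ℤ/eℤ)^n ⋊ 𝔖_n`, with `w = x(a_1,…,a_n)` recorded as
`⟨(a_i), x⟩`. -/
abbrev Wt (e n : ℕ) := NC e n ⋊[permHom e n] Equiv.Perm (Fin n)

noncomputable instance WtFintype (e n : ℕ) [NeZero e] : Fintype (Wt e n) :=
  Fintype.ofEquiv (NC e n × Equiv.Perm (Fin n))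
    { toFun := fun x => ⟨x.1, x.2⟩
      invFun := fun x => (x.left, x.right)
      left_inv := fun _ => rfl
      right_inv := fun _ => rfl }

/-- The character `w ↦ ∑ a_i mod p` of `W̃`. -/
noncomputable def wsumHom (e p n : ℕ) (hp : p ∣ e) : Wt e n →* Multiplicative (ZMod p) where
  toFun w := Multiplicative.ofAdd (∑ i, ZMod.castHom hp (ZMod p) (w.left i).toAdd)
  map_one' := by simp
  map_mul' w w' := by
    have h : ∀ i, ((w * w').left i).toAdd
        = (w.left i).toAdd + (w'.left (w.right.symm i)).toAdd := fun _ => rfl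
    simp only [h, map_add, Finset.sum_add_distrib, ofAdd_add]
    congr 2
    exact Equiv.sum_comp w.right.symm
      (fun i => ZMod.castHom hp (ZMod p) ((w'.left i).toAdd))

/-- `W = G(e,p,n)`: the subgroup of `W̃` on which `∑ a_i ≡ 0 (mod p)`. -/
noncomputable def Wgrp (e p n : ℕ) (hp : p ∣ e) : Subgroup (Wt e n) :=
  (wsumHom e p n hp).ker

/-- `σ = t_1 ∈ W̃`. -/
def sigmaElt (e n : ℕ) [NeZero n] : Wt e n :=
  SemidirectProduct.inl (fun i => Multiplicative.ofAdd (if i = (0 : Fin n) then (1 : ZMod e) else 0))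

/-- membership in the coset `σ^q W`. -/
def inCoset (e p n : ℕ) [NeZero n] (hp : p ∣ e) (q : ℕ) (w : Wt e n) : Prop :=
  ∃ u ∈ Wgrp e p n hp, w = (sigmaElt e n) ^ q * u

/-- conjugacy under `W`. -/
def IsConjW (e p n : ℕ) (hp : p ∣ e) (w w' : Wt e n) : Prop :=
  ∃ u ∈ Wgrp e p n hp, u * w * u⁻¹ = w'

/-- The `e`-partition recording the conjugacy class of `w ∈ W̃`:
a `k`-cycle of length `l` (a cycle of the underlying permutation whose
accumulated `ZMod e`-color is `k`, fixed points counting as `1`-cycles)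
contributes a part `l` to the `k`-th component. -/
noncomputable def classOf (e n : ℕ) [NeZero e] (w : Wt e n) : ZMod e → Multiset ℕ := fun k =>
  ((w.right.cycleFactorsFinset.val.filter
      (fun c => (∑ i ∈ c.support, (w.left i).toAdd) = k)).map fun c => c.support.card)
    + Multiset.replicate
        ((Finset.univ.filter fun i : Fin n => w.right i = i ∧ (w.left i).toAdd = k).card) 1

/-! ### The standard class representative `w_α(b)` -/

/-- The list of (part, color) pairs of an `e`-partition. -/
noncomputable def partsList (e : ℕ) [NeZero e] (α : ZMod e → Multiset ℕ) : List (ℕ × ZMod e) :=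
  (Finset.univ : Finset (ZMod e)).toList.flatMap fun k => (α k).toList.map fun r => (r, k)

/-- the color datum of `w_α(b)`: each cycle carries its color at its first
point, except the first (exceptional) cycle, which carries `k - b` at its
first point and `b` at its last point. -/
noncomputable def aexc (e : ℕ) [NeZero e] (L : List (ℕ × ZMod e)) (b : ZMod e) :
    (Σ i : Fin L.length, Fin (L.get i).1) → ZMod e := fun x =>
  if (x.1 : ℕ) = 0 then
    (if (x.2 : ℕ) = 0 then (L.get x.1).2 - b else 0)
      + (if (x.2 : ℕ) = (L.get x.1).1 - 1 then b else 0)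
  else if (x.2 : ℕ) = 0 then (L.get x.1).2 else 0

/-- The standard representative `w_α(b) ∈ W̃` of the paper, 2.6: a product of
disjoint cycles matching `α`, of the form `t_{i_1}^k z` except for one
exceptional cycle `t_{i_1}^{k-b} t_{i_m}^{b} z`. -/
noncomputable def wrep (e n : ℕ) [NeZero e] (α : ZMod e → Multiset ℕ) (b : ZMod e) : Wt e n :=
  if hcard : Fintype.card (Σ i : Fin (partsList e α).length, Fin ((partsList e α).get i).1) = n then
    let φ := Fintype.equivFinOfCardEq hcard
    ⟨fun t => Multiplicative.ofAdd (aexc e (partsList e α) b (φ.symm t)),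
      φ.symm.trans ((Equiv.sigmaCongrRight fun _ => finRotate _).trans φ)⟩
  else 1

/-! ## The tensor space `V^{⊗n}` -/

/-- Basis index of `V = ⊕_k V_k`, `dim V_k = m k`. -/
abbrev BIdx (e : ℕ) [NeZero e] (m : ZMod e → ℕ) := Σ k : ZMod e, Fin (m k)

/-- Basis index of `V^{⊗n}`. -/
abbrev TIdx (e n : ℕ) [NeZero e] (m : ZMod e → ℕ) := Fin n → BIdx e m

/-- `ζ` raised to a `ZMod e` exponent. -/
noncomputable def zmpow (e : ℕ) [NeZero e] (ζ : ℂ) (c : ZMod e) : ℂ := ζ ^ c.val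

/-- the matrix of `w ∈ W̃` on `V^{⊗n}` (𝔖_n permutes the factors, and
`t_k` multiplies by `ζ^j` if the `k`-th factor lies in `V_j`). -/
noncomputable def rhoMat (e n : ℕ) [NeZero e] (ζ : ℂ) (m : ZMod e → ℕ) (w : Wt e n) :
    Matrix (TIdx e n m) (TIdx e n m) ℂ := fun b' b =>
  if b' = b ∘ ⇑w.right.symm then ∏ s, ζ ^ (((w.left s).toAdd.val) * (b' s).1.val) else 0

/-- The operator `D` (multiplication by `x_{i_1} ⋯ x_{i_n}`), with the
variables evaluated via `xv`. -/
noncomputable def Dmat (e n : ℕ) [NeZero e] (m : ZMod e → ℕ) (xv : BIdx e m → ℂ) :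
    Matrix (TIdx e n m) (TIdx e n m) ℂ :=
  Matrix.diagonal fun b => ∏ s, xv (b s)

/-- `τ` on the basis of `V`: `v_j^{(k)} ↦ v_j^{(k+d)}` (uses `m (k+d) = m k`). -/
def tauB (e : ℕ) [NeZero e] (d : ℕ) (m : ZMod e → ℕ) (hm : ∀ k, m (k + (d : ZMod e)) = m k) :
    BIdx e m → BIdx e m := fun b => ⟨b.1 + (d : ZMod e), Fin.cast (hm b.1).symm b.2⟩

/-- `g ↦ g^{⊗ n}`: the matrix of `g ∈ End V` acting diagonally on `V^{⊗n}`. -/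
noncomputable def tensorPow (e n : ℕ) [NeZero e] (m : ZMod e → ℕ)
    (g : Matrix (BIdx e m) (BIdx e m) ℂ) : Matrix (TIdx e n m) (TIdx e n m) ℂ :=
  Matrix.of fun b' b => ∏ s, g (b' s) (b s)

/-- the matrix of `τ` on `V`. -/
noncomputable def tauV (e : ℕ) [NeZero e] (d : ℕ) (m : ZMod e → ℕ)
    (hm : ∀ k, m (k + (d : ZMod e)) = m k) : Matrix (BIdx e m) (BIdx e m) ℂ :=
  fun b' b => if b' = tauB e d m hm b then 1 else 0

/-- the matrix of `τ` on `V^{⊗n}`. -/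
noncomputable def tauMat (e n : ℕ) [NeZero e] (d : ℕ) (m : ZMod e → ℕ)
    (hm : ∀ k, m (k + (d : ZMod e)) = m k) : Matrix (TIdx e n m) (TIdx e n m) ℂ :=
  tensorPow e n m (tauV e d m hm)

/-- a member of `G = GL_{m_0} × ⋯ × GL_{m_{e-1}}` (as an endomorphism of V,
invertibility stated separately). -/
def IsBlockDiag (e : ℕ) [NeZero e] (m : ZMod e → ℕ) (g : Matrix (BIdx e m) (BIdx e m) ℂ) : Prop :=
  ∀ b b' : BIdx e m, b.1 ≠ b'.1 → g b b' = 0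

/-- a block upper unitriangular matrix (product of root subgroups for the
positive roots of `G`). -/
def IsUpperUni (e : ℕ) [NeZero e] (m : ZMod e → ℕ) (g : Matrix (BIdx e m) (BIdx e m) ℂ) : Prop :=
  (∀ b, g b b = 1) ∧
    ∀ b b' : BIdx e m, b ≠ b' → ¬(b.1 = b'.1 ∧ b.2.val < b'.2.val) → g b b' = 0

/-! ## Symmetric functions (evaluated form) -/

/-- value of the variable `x_i^{(k)}` under the assignment `xv` (junk `0` out
of range). -/
noncomputable def xval (e : ℕ) [NeZero e] (m : ZMod e → ℕ) (xv : BIdx e m → ℂ)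
    (k : ZMod e) (i : ℕ) : ℂ :=
  if h : i < m k then xv ⟨k, ⟨i, h⟩⟩ else 0

/-- `h_j`: the order of the image of `j` in `ℤ/pℤ`. -/
noncomputable def hOrd (p j : ℕ) : ℕ := addOrderOf ((j : ZMod p))

/-- `j₁ d` where `j₁ = p / h_j`: the number of components of the variable
system `𝒳_j`. -/
noncomputable def Esys (p d j : ℕ) : ℕ := (p / hOrd p j) * d

/-- the variable `X_i^{(k)} = x_i^{(k)} x_i^{(k+jd)} ⋯ x_i^{(k+(h_j-1)jd)}`
of the system `𝒳_j`. -/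
noncomputable def Xvar (e : ℕ) [NeZero e] (p d : ℕ) (m : ZMod e → ℕ) (xv : BIdx e m → ℂ)
    (j k i : ℕ) : ℂ :=
  ∏ s ∈ Finset.range (hOrd p j), xval e m xv (((k + s * j * d : ℕ) : ZMod e)) i

/-- number of variables in the `k`-th component of any of the systems `𝒳_j`. -/
noncomputable def mmX (e : ℕ) [NeZero e] (m : ZMod e → ℕ) : ℕ → ℕ := fun k => m ((k : ℕ) : ZMod e)

/-- The variables of the system `𝒳_j`, as a doubly indexed family. -/
noncomputable def vvX (e : ℕ) [NeZero e] (p d : ℕ) (m : ZMod e → ℕ) (xv : BIdx e m → ℂ)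
    (j : ℕ) : ℕ → ℕ → ℂ := fun k i => Xvar e p d m xv j k i

/-- complete homogeneous symmetric polynomial `h_r` in `N` variables. -/
noncomputable def hcomp (N r : ℕ) (v : ℕ → ℂ) : ℂ :=
  ∑ c ∈ Finset.Nat.antidiagonalTuple N r, ∏ i : Fin N, v i ^ c i

/-- the parts of a partition in decreasing order (`0` beyond the length). -/
noncomputable def lamOf (μ : Multiset ℕ) (i : ℕ) : ℕ := ((μ.sort (· ≤ ·)).reverse).getD i 0

/-- Schur polynomial in `N` variables (Jacobi–Trudi). -/
noncomputable def schurFin (N : ℕ) (μ : Multiset ℕ) (v : ℕ → ℂ) : ℂ :=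
  Matrix.det (Matrix.of fun i j : Fin N =>
    if h : (0 : ℤ) ≤ (lamOf μ i + j : ℤ) - i then hcomp N ((lamOf μ i + j : ℤ) - i).toNat v
    else 0)

/-- monomial symmetric polynomial in `N` variables. -/
noncomputable def monoFin (N : ℕ) (μ : Multiset ℕ) (v : ℕ → ℂ) : ℂ :=
  ∑ c ∈ (Finset.Nat.antidiagonalTuple N μ.sum).filter
      (fun c => ((List.ofFn c : List ℕ) : Multiset ℕ).filter (fun x => 0 < x) = μ),
    ∏ i : Fin N, v i ^ c i

/-! ### generic families for a variable system with `E` components -/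

/-- `p_r^{(i)} = ∑_{k<E} u^{ik} p_r(x^{(k)})` (formula (2.2.2)/(2.4.2), with
`u` a primitive `E`-th root of unity), for the system of variables
`vv k i` (`k < E`, `i < mm k`); `p_0^{(i)} = 1`. -/
noncomputable def pGenSys (u : ℂ) (E : ℕ) (mm : ℕ → ℕ) (vv : ℕ → ℕ → ℂ) (i r : ℕ) : ℂ :=
  if r = 0 then 1 else ∑ k ∈ Finset.range E, u ^ (i * k) * ∑ s ∈ Finset.range (mm k), vv k s ^ r

/-- the power sum `p_γ` of an `E`-tuple of partitions (2.2.1). -/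
noncomputable def pAlphaSys (u : ℂ) (E : ℕ) (mm : ℕ → ℕ) (vv : ℕ → ℕ → ℂ)
    (γ : ℕ → Multiset ℕ) : ℂ :=
  ∏ k ∈ Finset.range E, ((γ k).map fun r => pGenSys u E mm vv k r).prod

/-- the Schur function `s_γ` of an `E`-tuple of partitions. -/
noncomputable def sAlphaSys (E : ℕ) (mm : ℕ → ℕ) (vv : ℕ → ℕ → ℂ) (γ : ℕ → Multiset ℕ) : ℂ :=
  ∏ k ∈ Finset.range E, schurFin (mm k) (γ k) (vv k)

/-- the monomial symmetric function `m_γ` of an `E`-tuple of partitions. -/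
noncomputable def mAlphaSys (E : ℕ) (mm : ℕ → ℕ) (vv : ℕ → ℕ → ℂ) (γ : ℕ → Multiset ℕ) : ℂ :=
  ∏ k ∈ Finset.range E, monoFin (mm k) (γ k) (vv k)

/-- the function `q_{r,±}^{(k)}(x;t)` of [S], (3.1.1). -/
noncomputable def qGenSys (t : ℂ) (E : ℕ) (mm : ℕ → ℕ) (vv : ℕ → ℕ → ℂ)
    (sgn : Bool) (k r : ℕ) : ℂ :=
  if r = 0 then 1 else
    let k' := if sgn then (k + 1) % E else (k + E - 1) % E
    ∑ i ∈ Finset.range (mm k),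
      vv k i ^ ((r : ℤ) + (mm k : ℤ) - 1 - (mm k' : ℤ)) *
        (∏ jj ∈ Finset.range (mm k'), (vv k i - t * vv k' jj)) /
        ∏ jj ∈ (Finset.range (mm k)).erase i, (vv k i - vv k jj)

/-- the function `q_{γ,±}(x;t)` of [S], (3.1.2). -/
noncomputable def qAlphaSys (t : ℂ) (E : ℕ) (mm : ℕ → ℕ) (vv : ℕ → ℕ → ℂ)
    (sgn : Bool) (γ : ℕ → Multiset ℕ) : ℂ :=
  ∏ k ∈ Finset.range E, ((γ k).map fun r => qGenSys t E mm vv sgn k r).prod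

/-- `z_β = ∏ i^{n_i} n_i!` for a partition `β = (1^{n_1} 2^{n_2} ⋯)`. -/
noncomputable def zPart (μ : Multiset ℕ) : ℂ :=
  ∏ i ∈ μ.toFinset, (i : ℂ) ^ (μ.count i) * (Nat.factorial (μ.count i) : ℂ)

/-- `z_γ(t) = z_γ ∏_{k,j} (1 - u^k t^{γ_j^{(k)}})⁻¹` for an `E`-tuple of
partitions `γ` (`u` the `E`-th root of unity), cf. (3.1.3). -/
noncomputable def zClassSys (u t : ℂ) (E : ℕ) (γ : ℕ → Multiset ℕ) : ℂ :=
  ((E : ℂ) ^ (∑ k ∈ Finset.range E, (γ k).card)) * (∏ k ∈ Finset.range E, zPart (γ k)) *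
    (∏ k ∈ Finset.range E, ((γ k).map fun r => (1 - u ^ k * t ^ r)).prod)⁻¹

/-! ### the `j`-th pieces attached to an e-partition -/

/-- the truncation `α{j} = (α^{(0)},…,α^{(j₁d-1)})` (used when `c_{α,p} ∣ j`). -/
noncomputable def braceF (e : ℕ) [NeZero e] (p d : ℕ) (j : ℕ) (α : ZMod e → Multiset ℕ) :
    ℕ → Multiset ℕ :=
  fun k => if k < Esys p d j then α ((k : ℕ) : ZMod e) else 0

/-- the `j₁d`-partition `α[j]` of `n/h` (condition (2.6.1)): component `k/h`
has parts `α_i^{(k)}/h`. -/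
noncomputable def bracketF (e : ℕ) [NeZero e] (p d : ℕ) (j : ℕ) (α : ZMod e → Multiset ℕ) :
    ℕ → Multiset ℕ :=
  fun k' => if k' < Esys p d j then (α (((hOrd p j * k' : ℕ) : ZMod e))).map (fun r => r / hOrd p j)
  else 0

/-- condition (2.6.1): `h_j` divides all parts `α_i^{(k)}`, and `h_j ∣ k`
whenever `α^{(k)} ≠ ∅`. -/
def Cond261 (e : ℕ) [NeZero e] (p j : ℕ) (α : ZMod e → Multiset ℕ) : Prop :=
  (∀ k, ∀ r ∈ α k, hOrd p j ∣ r) ∧ ∀ k : ZMod e, α k ≠ 0 → hOrd p j ∣ k.val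

/-- `s_{α{j}}(𝒳_j)`. -/
noncomputable def schurBrace (e : ℕ) [NeZero e] (p d : ℕ) (m : ZMod e → ℕ) (xv : BIdx e m → ℂ)
    (j : ℕ) (α : ZMod e → Multiset ℕ) : ℂ :=
  sAlphaSys (Esys p d j) (mmX e m) (vvX e p d m xv j) (braceF e p d j α)

/-- `p_{α[j]}(𝒳_j)` (2.6; the root of unity for the system `𝒳_j` is `ζ^h`). -/
noncomputable def pBracket (e : ℕ) [NeZero e] (p d : ℕ) (ζ : ℂ) (m : ZMod e → ℕ)
    (xv : BIdx e m → ℂ) (j : ℕ) (α : ZMod e → Multiset ℕ) : ℂ :=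
  pAlphaSys (ζ ^ hOrd p j) (Esys p d j) (mmX e m) (vvX e p d m xv j) (bracketF e p d j α)

/-- `l(α[j])`. -/
noncomputable def lenBracket (e : ℕ) [NeZero e] (p d : ℕ) (j : ℕ)
    (α : ZMod e → Multiset ℕ) : ℕ :=
  ∑ k ∈ Finset.range (Esys p d j), (bracketF e p d j α k).card

/-! ### Schur functions and power sums for `σ^q W` (2.10) -/

/-- the `j`-th component `s^j_{α,φ}` of the Schur function `𝐬_{α,φ}` for
`σ^q W` (2.10.1); the character `φ = φ_r` of `Γ_α = ⟨τ^c⟩ ≅ ℤ/(p/c)ℤ` is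
encoded by `r`, via `φ_r(τ^j) = ζ^{drj}` for `c ∣ j`. -/
noncomputable def sTuple (e : ℕ) [NeZero e] (p d q : ℕ) (ζ : ℂ) (m : ZMod e → ℕ)
    (xv : BIdx e m → ℂ) (α : ZMod e → Multiset ℕ) (r : ℕ) (j : ℕ) : ℂ :=
  if csize e d α ∣ j then
    ζ ^ (d * r * j) *
      ∑ i ∈ Finset.range (csize e d α),
        ζ ^ (q * i * d) * schurBrace e p d m xv j ((theta e d)^[i] α)
  else 0

/-- the `j`-th component `p^j_{β,b}` of the power sum `𝐩_{β,b}` for `σ^q W`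
(2.10.2). -/
noncomputable def pTuple (e : ℕ) [NeZero e] (p d : ℕ) (ζ : ℂ) (m : ZMod e → ℕ)
    (xv : BIdx e m → ℂ) (β : ZMod e → Multiset ℕ) (b : ZMod e) (j : ℕ) : ℂ :=
  if Cond261 e p j β then
    (hOrd p j : ℂ) ^ (lenBracket e p d j β) *
      zmpow e ζ (-(((Delta e β : ZMod e) + b) * ((j * d : ℕ) : ZMod e))) *
      pBracket e p d ζ m xv j β
  else 0

/-! ## The model for (extensions of) the irreducible characters of `W` -/

/-- trace of `f` on a subspace (junk `0` if not invariant). -/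
noncomputable def traceOn {V : Type*} [AddCommGroup V] [Module ℂ V]
    (S : Submodule ℂ V) (f : V →ₗ[ℂ] V) : ℂ :=
  if h : ∀ v ∈ S, f v ∈ S then LinearMap.trace ℂ S (f.restrict h) else 0

/-- the scalar by which the torus element `diag dv ∈ G` acts on a highest
weight vector of weight `α`. -/
noncomputable def weightOf (e : ℕ) [NeZero e] (m : ZMod e → ℕ) (α : ZMod e → Multiset ℕ)
    (dv : BIdx e m → ℂ) : ℂ :=
  ∏ b : BIdx e m, dv b ^ (lamOf (α b.1) b.2.val)

/-- the space of highest weight vectors of weight `α` in `V^{⊗n}`: the model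
for the irreducible `W̃`-module `Z_α` (1.3.1, 1.4). -/
noncomputable def hwSubmodule (e n : ℕ) [NeZero e] (m : ZMod e → ℕ)
    (α : ZMod e → Multiset ℕ) : Submodule ℂ (TIdx e n m → ℂ) :=
  (⨅ g ∈ {g | IsUpperUni e m g},
      Module.End.eigenspace (Matrix.mulVecLin (tensorPow e n m g)) 1) ⊓
    ⨅ dv : BIdx e m → ℂ,
      Module.End.eigenspace (Matrix.mulVecLin (tensorPow e n m (Matrix.diagonal dv)))
        (weightOf e m α dv)

/-- the model for the irreducible `W`-module `Z_{α,φ_r}`: the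
`φ_r(τ^c)`-eigenspace of `τ^c` on `Z_α`, where `c = c_{α,p}` and
`φ_r(τ^c) = ζ^{cdr}`. -/
noncomputable def ZSub (e n : ℕ) [NeZero e] (d : ℕ) (m : ZMod e → ℕ)
    (hm : ∀ k, m (k + (d : ZMod e)) = m k) (ζ : ℂ) (α : ZMod e → Multiset ℕ) (r : ℕ) :
    Submodule ℂ (TIdx e n m → ℂ) :=
  hwSubmodule e n m α ⊓
    Module.End.eigenspace (Matrix.mulVecLin ((tauMat e n d m hm) ^ (csize e d α)))
      (ζ ^ (csize e d α * d * r))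

/-- The model for the irreducible character `χ^{α,φ_r}` of `W` and for its
chosen extension `χ̃^{α,φ_r}` to `⟨σ^q⟩ ⋉ W`: the trace of `w` on the model
`Z_{α,φ_r} ⊆ V^{⊗n}`. -/
noncomputable def charExt (e n : ℕ) [NeZero e] (d : ℕ) (m : ZMod e → ℕ)
    (hm : ∀ k, m (k + (d : ZMod e)) = m k) (ζ : ℂ) (α : ZMod e → Multiset ℕ) (r : ℕ)
    (w : Wt e n) : ℂ :=
  traceOn (ZSub e n d m hm ζ α r) (Matrix.mulVecLin (rhoMat e n ζ m w))

/-! ## symbols, a-function, similarity; the reflection representation -/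

/-- the multiset of entries of the symbol `Λ(α) = α + Λ⁰` of type `(r,0)`. -/
noncomputable def entriesSym (e : ℕ) [NeZero e] (m : ZMod e → ℕ) (rsym : ℕ)
    (α : ZMod e → Multiset ℕ) : Multiset ℕ :=
  (Finset.univ : Finset (BIdx e m)).val.map fun b =>
    lamOf (α b.1) b.2.val + rsym * (m b.1 - 1 - b.2.val)

noncomputable def pairMinSum (M : Multiset ℕ) : ℕ :=
  (M.bind fun a => M.map fun b => min a b).sum

/-- the `a`-function (3.5.2) on symbols of type `(rsym, 0)`. -/
noncomputable def aVal (e : ℕ) [NeZero e] (m : ZMod e → ℕ) (rsym : ℕ)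
    (α : ZMod e → Multiset ℕ) : ℕ :=
  pairMinSum (entriesSym e m rsym α) - pairMinSum (entriesSym e m rsym (fun _ => 0))

/-- similarity of symbols: equality of entries with multiplicities. -/
def SimSym (e : ℕ) [NeZero e] (m : ZMod e → ℕ) (rsym : ℕ) (α β : ZMod e → Multiset ℕ) : Prop :=
  entriesSym e m rsym α = entriesSym e m rsym β

/-- the reflection representation `M = ℂ^n` of `W̃` (`w(e_i) = ζ^{a_i} e_{x(i)}`). -/
noncomputable def refMat (e n : ℕ) [NeZero e] (ζ : ℂ) (w : Wt e n) :
    Matrix (Fin n) (Fin n) ℂ :=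
  fun i' i => if i' = w.right i then zmpow e ζ (w.left i').toAdd else 0

/-- The functional `R_q(f)` of (4.2.1), for a function `f` on the coset `σ^q W`. -/
noncomputable def Rq (e p d n : ℕ) [NeZero e] [NeZero n] (hp : p ∣ e) (ζ t : ℂ) (q : ℕ)
    (f : Wt e n → ℂ) : ℂ :=
  (ζ ^ (q * d) * t ^ (d * n) - 1) * (∏ i ∈ Finset.Icc 1 (n - 1), (t ^ (e * i) - 1)) *
    (Nat.card (Wgrp e p n hp) : ℂ)⁻¹ *
    ∑ w ∈ Finset.univ.filter (fun w => inCoset e p n hp q w),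
      (refMat e n ζ w).det * f w / (t • (1 : Matrix (Fin n) (Fin n) ℂ) - refMat e n ζ w).det

/-- `N^*`: the number of reflections in `W`. -/
noncomputable def Nstar (e p n : ℕ) [NeZero e] (hp : p ∣ e) (ζ : ℂ) : ℕ :=
  Nat.card {w : Wt e n // w ∈ Wgrp e p n hp ∧ w ≠ 1 ∧ (refMat e n ζ w - 1).rank = 1}

end GreenII

/-!
The submodule `S` is spanned by the images of `v` under products of lowering operators. Only
weight spaces stable under `τ^j` contribute to the trace, and a stable weight is determined by its
values on the blocks `0 ≤ k < j₁d`; so the trace of `D τ^j` on `S` is the value at `𝒳_j` of the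
polynomial `F = ∑_μ Tr(P_μ τ^j | S) X^μ`, where `P_μ` projects onto the weight space and `X^μ`
only sees these blocks.

`F` is symmetric in each block, is supported on weights dominated by `β{j}` and has coefficient
`1` at `β{j}`. The quadratic Casimir operators of the blocks act on `S` by scalars; commuting
`τ^j` around the trace turns this into a differential equation for `F` which says that the product
of `F` with the Vandermonde determinants `Δ` of the blocks is an eigenvector of `∑ (x ∂/∂x)²`. The
monomials of the antisymmetric polynomial `F Δ` are dominated by `β{j} + δ`, and all those of
maximal norm are permutations of this exponent, so `F Δ` is the alternant of `β{j} + δ`: this is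
Weyl's formula for `F`. The Jacobi–Trudi identity turns the quotient of alternants into the
determinants that define `s_{β{j}}`.
-/

namespace GreenII

/-! ### Jacobi–Trudi -/

section JacobiTrudi

variable {R : Type*} [CommRing R] {N : ℕ}

/-- The generating series `∑ h_r tʳ = ∏ 1 / (1 - v_i t)` of the complete homogeneous symmetric
polynomials. -/
noncomputable def completeSeries (v : Fin N → R) : PowerSeries R :=
  ∏ i, PowerSeries.mk fun r => v i ^ r

/-- The complete homogeneous symmetric polynomial `h_z`, which vanishes for `z < 0`. -/
noncomputable def completeHom (v : Fin N → R) (z : ℤ) : R :=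
  if 0 ≤ z then PowerSeries.coeff z.toNat (completeSeries v) else 0

/-- `∏_{i ≠ l} (1 - v_i t)`. -/
noncomputable def omitPoly (v : Fin N → R) (l : Fin N) : Polynomial R :=
  ∏ i ∈ Finset.univ.erase l, (1 - Polynomial.C (v i) * Polynomial.X)

theorem coeff_completeSeries (v : Fin N → R) (r : ℕ) :
    PowerSeries.coeff r (completeSeries v) =
      ∑ c ∈ Finset.Nat.antidiagonalTuple N r, ∏ i, v i ^ c i := by
  rw [completeSeries, PowerSeries.coeff_prod, ← Finset.piAntidiag_univ_fin_eq_antidiagonalTuple]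
  refine Finset.sum_bij' (fun l _ => ⇑l) (fun f _ => Finsupp.equivFunOnFinite.symm f)
    (fun l hl => ?_) (fun f hf => ?_) (fun l _ => by ext; simp) (fun f _ => by ext; simp)
    (fun l _ => by simp)
  · simp [(Finset.mem_finsuppAntidiag.1 hl).1]
  · simp [Finset.mem_finsuppAntidiag, (Finset.mem_piAntidiag.1 hf).1]

theorem map_completeHom {R' : Type*} [CommRing R'] (f : R →+* R') (v : Fin N → R) (z : ℤ) :
    f (completeHom v z) = completeHom (f ∘ v) z := by
  simp only [completeHom, coeff_completeSeries, Function.comp_apply]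
  split_ifs
  · simp only [map_sum, map_prod, map_pow]
  · exact map_zero f

theorem mk_pow_mul_one_sub (a : R) :
    PowerSeries.mk (fun r => a ^ r) * (1 - PowerSeries.C a * PowerSeries.X) = 1 := by
  simpa [PowerSeries.rescale_mk, PowerSeries.rescale_X] using
    congrArg (PowerSeries.rescale a) (PowerSeries.mk_one_mul_one_sub_eq_one R)

theorem completeSeries_mul_omitPoly (v : Fin N → R) (l : Fin N) :
    completeSeries v * (omitPoly v l : PowerSeries R) = PowerSeries.mk fun r => v l ^ r := by
  have coe_omitPoly : (omitPoly v l : PowerSeries R) =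
      ∏ i ∈ Finset.univ.erase l, (1 - PowerSeries.C (v i) * PowerSeries.X) := by
    rw [omitPoly, ← Polynomial.coeToPowerSeries.ringHom_apply, map_prod]
    simp
  rw [completeSeries, ← Finset.mul_prod_erase Finset.univ _ (Finset.mem_univ l), mul_assoc,
    coe_omitPoly, ← Finset.prod_mul_distrib,
    Finset.prod_congr rfl fun i _ => mk_pow_mul_one_sub (v i), Finset.prod_const_one, mul_one]

theorem natDegree_omitPoly_lt (v : Fin N → R) (l : Fin N) : (omitPoly v l).natDegree < N := by
  have hle : (omitPoly v l).natDegree ≤ ∑ i ∈ Finset.univ.erase l, 1 :=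
    (Polynomial.natDegree_prod_le _ _).trans (Finset.sum_le_sum fun i _ => by compute_degree)
  have := l.pos
  simp only [Finset.sum_const, smul_eq_mul, mul_one, Finset.card_erase_of_mem (Finset.mem_univ l),
    Finset.card_univ, Fintype.card_fin] at hle
  omega

theorem pow_eq_sum_completeHom (v : Fin N → R) (l : Fin N) (α : ℕ) :
    v l ^ α = ∑ j ∈ Finset.range N, completeHom v ((α : ℤ) - j) * (omitPoly v l).coeff j := by
  have h := congrArg (PowerSeries.coeff α) (completeSeries_mul_omitPoly v l)
  rw [PowerSeries.coeff_mk, (omitPoly v l).as_sum_range' N (natDegree_omitPoly_lt v l),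
    ← Polynomial.coeToPowerSeries.ringHom_apply, map_sum, Finset.mul_sum, map_sum] at h
  rw [← h]
  refine Finset.sum_congr rfl fun j _ => ?_
  rw [← Polynomial.C_mul_X_pow_eq_monomial, Polynomial.coeToPowerSeries.ringHom_apply,
    Polynomial.coe_mul, Polynomial.coe_C, Polynomial.coe_pow, Polynomial.coe_X, ← mul_assoc,
    PowerSeries.coeff_mul_X_pow', completeHom]
  by_cases hj : j ≤ α
  · rw [if_pos hj, if_pos (by omega), PowerSeries.coeff_mul_C]
    congr 3
    omega
  · rw [if_neg hj, if_neg (by omega), zero_mul]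

theorem alternant_eq_completeHom_mul (v : Fin N → R) (lam : Fin N → ℕ) :
    (Matrix.of fun i l : Fin N => v l ^ (lam i + (N - 1 - (i : ℕ)))) =
      (Matrix.of fun i j : Fin N => completeHom v ((lam i : ℤ) + j - i)) *
      (Matrix.of fun j l : Fin N => (omitPoly v l).coeff (N - 1 - j)) := by
  ext i l
  rw [Matrix.mul_apply, Matrix.of_apply, pow_eq_sum_completeHom, ← Finset.sum_range_reflect,
    Finset.sum_range]
  refine Finset.sum_congr rfl fun j _ => ?_
  simp only [Matrix.of_apply]
  congr 2
  omega

theorem det_completeHom_sub (v : Fin N → R) :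
    (Matrix.of fun i j : Fin N => completeHom v ((j : ℤ) - i)).det = 1 := by
  rw [Matrix.det_of_isUpperTriangular]
  · exact Finset.prod_eq_one fun i _ => by
      simp [completeHom, coeff_completeSeries, Finset.Nat.antidiagonalTuple_zero_right]
  · intro i j hji
    have : (j : ℕ) < i := hji
    exact if_neg (by omega)

theorem jacobiTrudi (v : Fin N → R) (lam : Fin N → ℕ) :
    (Matrix.of fun i l : Fin N => v l ^ (lam i + (N - 1 - (i : ℕ)))).det =
      (Matrix.of fun i j : Fin N => completeHom v ((lam i : ℤ) + j - i)).det *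
      (Matrix.of fun i l : Fin N => v l ^ (N - 1 - (i : ℕ))).det := by
  have h := alternant_eq_completeHom_mul v 0
  simp only [Pi.zero_apply, Nat.cast_zero, zero_add] at h
  rw [alternant_eq_completeHom_mul, h, Matrix.det_mul, Matrix.det_mul, det_completeHom_sub, one_mul]

theorem schurFin_eq_det_completeHom (N : ℕ) (μ : Multiset ℕ) (v : ℕ → ℂ) :
    schurFin N μ v = (Matrix.of fun i j : Fin N =>
      completeHom (fun i : Fin N => v i) ((lamOf μ i : ℤ) + j - i)).det := by
  simp only [schurFin, hcomp, completeHom, coeff_completeSeries, dite_eq_ite]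

end JacobiTrudi

open MvPolynomial

/-! ### Dominance order -/

section Dominance

variable {J : Type*} [Fintype J] [PartialOrder J]

/-- Dominance of exponents with respect to an arbitrary finite order; for a chain this is the usual
dominance order on compositions, tested against antitone weights instead of initial sums. -/
def IsDominatedBy (ν μ : J →₀ ℕ) : Prop :=
  ∀ y : J → ℤ, Antitone y → ∑ a, y a * ν a ≤ ∑ a, y a * μ a

theorem IsDominatedBy.add {ν μ ν' μ' : J →₀ ℕ} (h : IsDominatedBy ν μ) (h' : IsDominatedBy ν' μ') :
    IsDominatedBy (ν + ν') (μ + μ') := fun y hy => by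
  simpa only [Finsupp.add_apply, Nat.cast_add, mul_add, Finset.sum_add_distrib]
    using add_le_add (h y hy) (h' y hy)

/-- The indicators of `{c | c ≤ a}` and `{c | c < a}` are antitone, and their difference reads off
the coordinate `a`. -/
theorem eq_of_forall_antitone_sum_eq {ν μ : J →₀ ℕ}
    (h : ∀ y : J → ℤ, Antitone y → ∑ a, y a * ν a = ∑ a, y a * μ a) : ν = μ := by
  ext a
  have hle := h (fun c => if c ≤ a then 1 else 0) fun b c hbc => by
    have := hbc.trans (b := c) (c := a); dsimp only; split_ifs <;> simp_all
  have hlt := h (fun c => if c < a then 1 else 0) fun b c hbc => by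
    have := hbc.trans_lt (b := c) (c := a); dsimp only; split_ifs <;> simp_all
  have indicator_eq : ∀ ρ : J →₀ ℕ, ∑ c, (if c ≤ a then (1 : ℤ) else 0) * ρ c -
      ∑ c, (if c < a then (1 : ℤ) else 0) * ρ c = ρ a := fun ρ => by
    rw [← Finset.sum_sub_distrib, Fintype.sum_eq_single a]
    · simp
    · intro c hc
      simp [lt_iff_le_and_ne, hc]
  have := indicator_eq ν
  rw [hle, hlt, indicator_eq μ] at this
  exact_mod_cast this.symm

theorem IsDominatedBy.left_eq_of_add_eq {ν μ ν' μ' : J →₀ ℕ} (h : IsDominatedBy ν μ)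
    (h' : IsDominatedBy ν' μ') (hadd : ν + ν' = μ + μ') : ν = μ := by
  refine eq_of_forall_antitone_sum_eq fun y hy => le_antisymm (h y hy) ?_
  have hsum : ∑ a, y a * ν a + ∑ a, y a * ν' a = ∑ a, y a * μ a + ∑ a, y a * μ' a := by
    simp only [← Finset.sum_add_distrib, ← mul_add, ← Nat.cast_add, ← Finsupp.add_apply, hadd]
  linarith [h' y hy]

theorem IsDominatedBy.eq_of_antitone_of_norm_eq {ν μ : J →₀ ℕ} (h : IsDominatedBy ν μ)
    (hν : Antitone ν) (hnorm : ∑ a, ν a ^ 2 = ∑ a, μ a ^ 2) : ν = μ := by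
  have hinner := h (fun a => ν a) fun a b hab => Nat.cast_le.2 (hν hab)
  have hnorm_int : ∑ a, (ν a : ℤ) ^ 2 = ∑ a, (μ a : ℤ) ^ 2 := mod_cast hnorm
  have hdist : ∑ a, ((μ a : ℤ) - ν a) ^ 2 ≤ 0 := calc
    ∑ a, ((μ a : ℤ) - ν a) ^ 2 =
        ∑ a, (μ a : ℤ) ^ 2 + ∑ a, (ν a : ℤ) ^ 2 - 2 * ∑ a, (ν a : ℤ) * μ a := by
      simp only [Finset.mul_sum, ← Finset.sum_sub_distrib, ← Finset.sum_add_distrib]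
      exact Finset.sum_congr rfl fun a _ => by ring
    _ ≤ 0 := by simp only [← sq] at hinner; linarith [hnorm_int]
  have hzero := (Finset.sum_eq_zero_iff_of_nonneg fun a _ => sq_nonneg ((μ a : ℤ) - ν a)).1
    (hdist.antisymm (Finset.sum_nonneg fun a _ => sq_nonneg _))
  ext a
  have := pow_eq_zero_iff two_ne_zero |>.1 (hzero a (Finset.mem_univ a))
  omega

variable {R : Type*} [CommSemiring R]

/-- `f` is `x^μ` plus a combination of monomials whose exponents are dominated by `μ`. -/
structure IsMonicAt (f : MvPolynomial J R) (μ : J →₀ ℕ) : Prop where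
  isDominatedBy : ∀ ν, coeff ν f ≠ 0 → IsDominatedBy ν μ
  coeff_eq_one : coeff μ f = 1

theorem IsMonicAt.mul {f g : MvPolynomial J R} {μ μ' : J →₀ ℕ} (hf : IsMonicAt f μ)
    (hg : IsMonicAt g μ') : IsMonicAt (f * g) (μ + μ') where
  isDominatedBy ν hν := by
    rw [coeff_mul] at hν
    obtain ⟨⟨x, y⟩, hxy, hne⟩ := Finset.exists_ne_zero_of_sum_ne_zero hν
    rw [← Finset.HasAntidiagonal.mem_antidiagonal.1 hxy]
    exact (hf.isDominatedBy x (left_ne_zero_of_mul hne)).add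
      (hg.isDominatedBy y (right_ne_zero_of_mul hne))
  coeff_eq_one := by
    rw [coeff_mul, Finset.sum_eq_single (μ, μ'), hf.coeff_eq_one, hg.coeff_eq_one, one_mul]
    · rintro ⟨x, y⟩ hxy hne
      by_contra hcoeff
      have hxy : x + y = μ + μ' := Finset.HasAntidiagonal.mem_antidiagonal.1 hxy
      obtain rfl := (hf.isDominatedBy x (left_ne_zero_of_mul hcoeff)).left_eq_of_add_eq
        (hg.isDominatedBy y (right_ne_zero_of_mul hcoeff)) hxy
      exact hne (Prod.ext rfl (add_left_cancel hxy))
    · simp [Finset.HasAntidiagonal.mem_antidiagonal]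

end Dominance

/-! ### Euler operators -/

section Euler

variable {J R : Type*} [CommRing R]

/-- The Euler operator `x_a ∂/∂x_a`. -/
noncomputable def euler (a : J) : Derivation R (MvPolynomial J R) (MvPolynomial J R) :=
  (X a : MvPolynomial J R) • pderiv a

theorem euler_apply (a : J) (f : MvPolynomial J R) : euler a f = X a * pderiv a f := rfl

theorem coeff_euler (a : J) (f : MvPolynomial J R) (ν : J →₀ ℕ) :
    coeff ν (euler a f) = ν a * coeff ν f := by
  induction f using MvPolynomial.induction_on' with
  | monomial u r =>
    rw [euler_apply, X_mul_pderiv_monomial, coeff_smul, coeff_monomial]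
    split_ifs with h
    · rw [h, nsmul_eq_mul]
    · rw [smul_zero, mul_zero]
  | add p q hp hq => rw [map_add, coeff_add, coeff_add, hp, hq, mul_add]

theorem euler_X_self (a : J) : euler a (X a : MvPolynomial J R) = X a := by
  rw [euler_apply, pderiv_X_self, mul_one]

theorem euler_X_of_ne {a b : J} (h : b ≠ a) : euler a (X b : MvPolynomial J R) = 0 := by
  rw [euler_apply, pderiv_X_of_ne h, mul_zero]

theorem euler_prod {ι : Type*} [DecidableEq ι] (a : J) (s : Finset ι) (f : ι → MvPolynomial J R) :
    euler a (∏ i ∈ s, f i) = ∑ i ∈ s, (∏ k ∈ s.erase i, f k) * euler a (f i) := by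
  induction s using Finset.induction_on with
  | empty => simp
  | insert i s hi ih =>
    rw [Finset.prod_insert hi, Derivation.leibniz, ih, Finset.sum_insert hi, Finset.erase_insert hi,
      smul_eq_mul, smul_eq_mul, Finset.mul_sum, add_comm]
    refine congrArg _ (Finset.sum_congr rfl fun k hk => ?_)
    have hki : k ≠ i := ne_of_mem_of_not_mem hk hi
    rw [Finset.erase_insert_of_ne hki.symm,
      Finset.prod_insert fun h => hi (Finset.mem_of_mem_erase h), mul_assoc]

variable [Fintype J]

theorem sum_euler_mul_euler_X (f : MvPolynomial J R) (b : J) :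
    ∑ a, euler a f * euler a (X b) = X b * euler b f := by
  rw [Fintype.sum_eq_single b fun a hab => by rw [euler_X_of_ne hab.symm, mul_zero],
    euler_X_self, mul_comm]

/-- The Laplacian `∑ (x_a ∂/∂x_a)²` of the torus. -/
noncomputable def laplacian : MvPolynomial J R →ₗ[R] MvPolynomial J R :=
  ∑ a, (euler a).toLinearMap ∘ₗ (euler a).toLinearMap

theorem laplacian_apply (f : MvPolynomial J R) : laplacian f = ∑ a, euler a (euler a f) := by
  simp [laplacian]

theorem coeff_laplacian (f : MvPolynomial J R) (ν : J →₀ ℕ) :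
    coeff ν (laplacian f) = (∑ a, ν a ^ 2 : ℕ) * coeff ν f := by
  simp only [laplacian_apply, coeff_sum, coeff_euler, ← mul_assoc, ← sq, Nat.cast_sum, Nat.cast_pow,
    Finset.sum_mul]

theorem laplacian_mul (f g : MvPolynomial J R) :
    laplacian (f * g) = laplacian f * g + 2 * ∑ a, euler a f * euler a g + f * laplacian g := by
  simp only [laplacian_apply, Finset.sum_mul, Finset.mul_sum, ← Finset.sum_add_distrib]
  refine Finset.sum_congr rfl fun a _ => ?_
  simp only [Derivation.leibniz, map_add, smul_eq_mul]
  ring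

end Euler

/-! ### Alternants and the Weyl character formula -/

/-- Indices of a basis adapted to a decomposition into blocks of sizes `N k`, ordered as a disjoint
sum of chains: indices in different blocks are incomparable. -/
abbrev BlockIdx {κ : Type*} (N : κ → ℕ) := Σ k, Fin (N k)

section Weyl

variable {κ : Type*} [Fintype κ] {N : κ → ℕ}

theorem sum_sameBlock_eq {M : Type*} [AddCommMonoid M] (g : BlockIdx N → BlockIdx N → M) :
    ∑ k, ∑ i, ∑ j, g ⟨k, i⟩ ⟨k, j⟩ =
      ∑ a, g a a + ∑ a, ∑ c ∈ Finset.Ioi a, (g a c + g c a) := by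
  simp only [Fintype.sum_sigma, Sigma.Ioi_mk, Finset.sum_map, Function.Embedding.sigmaMk_apply,
    ← Finset.sum_add_distrib (s := (Finset.univ : Finset κ))]
  refine Finset.sum_congr rfl fun k _ => ?_
  have off_diag := Finset.sum_sum_Ioi_add_eq_sum_sum_off_diag
    fun i j : Fin (N k) => g ⟨k, j⟩ ⟨k, i⟩
  rw [off_diag, ← Finset.sum_add_distrib]
  refine Finset.sum_congr rfl fun i _ => ?_
  rw [← Finset.sum_add_sum_compl {i}, Finset.sum_singleton]

theorem IsDominatedBy.sum_eq_of_block {ν μ : BlockIdx N →₀ ℕ} (h : IsDominatedBy ν μ) (y : κ → ℤ) :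
    ∑ a, y a.1 * ν a = ∑ a, y a.1 * μ a := by
  have hle := h (fun a => y a.1) (by rintro _ _ ⟨k, i, j, -⟩; exact le_rfl)
  have hge := h (fun a => -y a.1) (by rintro _ _ ⟨k, i, j, -⟩; exact le_rfl)
  simp only [neg_mul, Finset.sum_neg_distrib, neg_le_neg_iff] at hge
  exact hle.antisymm hge

/-- The exponent of the leading term of the Vandermonde product. -/
noncomputable def staircase (N : κ → ℕ) : BlockIdx N →₀ ℕ :=
  Finsupp.equivFunOnFinite.symm fun a => N a.1 - 1 - a.2

theorem staircase_apply (a : BlockIdx N) : staircase N a = N a.1 - 1 - a.2 := rfl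

theorem strictAnti_staircase : StrictAnti (staircase N) := by
  rintro _ _ ⟨k, i, j, hij⟩
  simp only [staircase_apply]
  have : (i : ℕ) < j := hij
  omega

theorem strictAnti_add_staircase {lam : BlockIdx N →₀ ℕ} (hlam : Antitone lam) :
    StrictAnti (lam + staircase N) :=
  hlam.add_strictAnti strictAnti_staircase

/-- The exponent `μ` with entries permuted inside each block. -/
noncomputable def permExponent (μ : BlockIdx N →₀ ℕ) (w : ∀ k, Equiv.Perm (Fin (N k))) :
    BlockIdx N →₀ ℕ :=
  Finsupp.equivFunOnFinite.symm fun a => μ ⟨a.1, w a.1 a.2⟩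

theorem permExponent_apply (μ : BlockIdx N →₀ ℕ) (w : ∀ k, Equiv.Perm (Fin (N k)))
    (a : BlockIdx N) : permExponent μ w a = μ ⟨a.1, w a.1 a.2⟩ := rfl

theorem isDominatedBy_permExponent {μ : BlockIdx N →₀ ℕ} (hμ : Antitone μ)
    (w : ∀ k, Equiv.Perm (Fin (N k))) : IsDominatedBy (permExponent μ w) μ := by
  intro y hy
  simp only [Fintype.sum_sigma]
  refine Finset.sum_le_sum fun k _ => ?_
  have hmono : Monovary (fun i => y ⟨k, i⟩) (fun i : Fin (N k) => (μ ⟨k, i⟩ : ℤ)) := by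
    refine Antitone.monovary (fun i j hij => hy ?_) fun i j hij => Nat.cast_le.2 (hμ ?_) <;>
      exact Sigma.mk_le_mk_iff.2 hij
  exact hmono.sum_mul_comp_perm_le_sum_mul (σ := w k)

theorem sum_sq_permExponent (μ : BlockIdx N →₀ ℕ) (w : ∀ k, Equiv.Perm (Fin (N k))) :
    ∑ a, permExponent μ w a ^ 2 = ∑ a, μ a ^ 2 := by
  simp only [Fintype.sum_sigma]
  exact Finset.sum_congr rfl fun k _ => Equiv.sum_comp (w k) fun i => μ ⟨k, i⟩ ^ 2

variable {R : Type*} [CommRing R]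

variable (R) in
/-- The product over the blocks of the alternants `det (x_l ^ μ_i)`. -/
noncomputable def alternant (μ : BlockIdx N →₀ ℕ) : MvPolynomial (BlockIdx N) R :=
  ∏ k, (Matrix.of fun i l : Fin (N k) => (X ⟨k, l⟩ : MvPolynomial (BlockIdx N) R) ^ μ ⟨k, i⟩).det

theorem alternant_eq_sum (μ : BlockIdx N →₀ ℕ) :
    alternant R μ = ∑ w : ∀ k, Equiv.Perm (Fin (N k)),
      monomial (permExponent μ w) (∏ k, ((Equiv.Perm.sign (w k) : ℤ) : R)) := by
  simp only [alternant, Matrix.det_apply, Matrix.of_apply]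
  rw [Finset.prod_univ_sum, Fintype.piFinset_univ]
  refine Finset.sum_congr rfl fun w _ => ?_
  rw [monomial_eq, Finsupp.prod_fintype _ _ fun _ => pow_zero _, Fintype.prod_sigma, map_prod,
    ← Finset.prod_mul_distrib]
  refine Finset.prod_congr rfl fun k _ => ?_
  rw [Units.smul_def, zsmul_eq_mul, map_intCast]
  rfl

theorem exists_eq_permExponent {μ ν : BlockIdx N →₀ ℕ} (h : coeff ν (alternant R μ) ≠ 0) :
    ∃ w : ∀ k, Equiv.Perm (Fin (N k)), ν = permExponent μ w := by
  rw [alternant_eq_sum, coeff_sum] at h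
  obtain ⟨w, _, hw⟩ := Finset.exists_ne_zero_of_sum_ne_zero h
  rw [coeff_monomial, ne_eq, ite_eq_right_iff, not_forall] at hw
  exact ⟨w, hw.choose.symm⟩

theorem isMonicAt_alternant {μ : BlockIdx N →₀ ℕ} (hμ : StrictAnti μ) :
    IsMonicAt (alternant R μ) μ where
  isDominatedBy ν hν := by
    obtain ⟨w, rfl⟩ := exists_eq_permExponent hν
    exact isDominatedBy_permExponent hμ.antitone w
  coeff_eq_one := by
    have hinj : ∀ k, Function.Injective fun i : Fin (N k) => μ ⟨k, i⟩ := fun k =>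
      StrictAnti.injective fun i j hij => hμ (Sigma.mk_lt_mk_iff.2 hij)
    rw [alternant_eq_sum, coeff_sum, Fintype.sum_eq_single 1, coeff_monomial, if_pos]
    · simp
    · exact Finsupp.ext fun _ => rfl
    · intro w hw
      rw [coeff_monomial, if_neg]
      intro h
      refine hw (funext fun k => Equiv.ext fun i => hinj k ?_)
      simpa [permExponent_apply] using DFunLike.congr_fun h ⟨k, i⟩

theorem laplacian_alternant (μ : BlockIdx N →₀ ℕ) :
    laplacian (alternant R μ) = C ((∑ a, μ a ^ 2 : ℕ) : R) * alternant R μ := by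
  ext ν
  rw [coeff_laplacian, coeff_C_mul]
  by_cases h : coeff ν (alternant R μ) = 0
  · rw [h, mul_zero, mul_zero]
  · obtain ⟨w, rfl⟩ := exists_eq_permExponent h
    rw [sum_sq_permExponent]

theorem rename_swap_alternant (μ : BlockIdx N →₀ ℕ) {a b : BlockIdx N} (hab : a < b) :
    rename (Equiv.swap a b) (alternant R μ) = -alternant R μ := by
  obtain ⟨k, i, j, hij⟩ := hab
  unfold alternant
  rw [map_prod, ← Finset.mul_prod_erase _ _ (Finset.mem_univ k),
    ← Finset.mul_prod_erase Finset.univ _ (Finset.mem_univ k), ← neg_mul]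
  simp only [AlgHom.map_det]
  congr 1
  · rw [← neg_one_mul, ← Int.cast_one, ← Int.cast_neg, ← Units.val_one, ← Units.val_neg,
      ← Equiv.Perm.sign_swap hij.ne, ← Matrix.det_permute']
    congr 1
    ext1 r l
    simp only [AlgHom.mapMatrix_apply, Matrix.map_apply, Matrix.of_apply, Matrix.submatrix_apply,
      map_pow, rename_X, id]
    congr 2
    exact ((sigma_mk_injective (β := fun k => Fin (N k))).map_swap i j l).symm
  · refine Finset.prod_congr rfl fun k' hk' => congrArg _ ?_
    have hk : k' ≠ k := Finset.ne_of_mem_erase hk'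
    ext1 r l
    simp only [AlgHom.mapMatrix_apply, Matrix.map_apply, Matrix.of_apply, map_pow, rename_X]
    rw [Equiv.swap_apply_of_ne_of_ne] <;> simp [hk]

theorem alternant_staircase : alternant R (staircase N) =
    ∏ p ∈ Finset.univ.sigma (fun a : BlockIdx N => Finset.Ioi a), (X p.1 - X p.2) := by
  rw [Finset.prod_sigma, Fintype.prod_sigma, alternant]
  refine Finset.prod_congr rfl fun k _ => ?_
  simp only [Sigma.Ioi_mk, Finset.prod_map, Function.Embedding.sigmaMk_apply]
  have vandermonde := Matrix.det_projVandermonde (n := N k)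
    (fun _ => (1 : MvPolynomial (BlockIdx N) R)) (fun l => X ⟨k, l⟩)
  simp only [one_mul] at vandermonde
  rw [← vandermonde, ← Matrix.det_transpose]
  congr 1
  ext1 l i
  simp only [Matrix.transpose_apply, Matrix.of_apply, Matrix.projVandermonde_apply, one_pow,
    one_mul, staircase_apply, Fin.val_rev]
  congr 1
  omega

/-- A lexicographically largest exponent of an antisymmetric polynomial is antitone; minimising
`∑ i · ν_i` has the same effect. -/
theorem exists_antitone_of_rename_swap_eq_neg {κ : Type*} [Finite κ] {N : κ → ℕ}
    {f : MvPolynomial (BlockIdx N) R} (hf : f ≠ 0)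
    (hanti : ∀ a b, a < b → rename (Equiv.swap a b) f = -f) :
    ∃ ν, coeff ν f ≠ 0 ∧ Antitone ν := by
  have := Fintype.ofFinite κ
  obtain ⟨ν, hν, hmin⟩ := Finset.exists_min_image f.support
    (fun ν => ∑ a, (a.2 : ℤ) * ν a) (support_nonempty.2 hf)
  rw [mem_support_iff] at hν
  refine ⟨ν, hν, antitone_iff_forall_lt.2 fun a b hab => ?_⟩
  have swap_mem : ν.mapDomain (Equiv.swap a b) ∈ f.support := by
    have := coeff_rename_mapDomain (Equiv.swap a b) (Equiv.injective _) f ν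
    rw [hanti a b hab, coeff_neg] at this
    rwa [mem_support_iff, ← neg_ne_zero, this]
  have swap_apply : ∀ c, ν.mapDomain (Equiv.swap a b) c = ν (Equiv.swap a b c) := fun c => by
    rw [← Finsupp.equivMapDomain_eq_mapDomain, Finsupp.equivMapDomain_apply, Equiv.symm_swap]
  have sum_sub : ∑ c, ((c.2 : ℤ) * ν (Equiv.swap a b c) - c.2 * ν c) =
      (a.2 * ν b - a.2 * ν a) + (b.2 * ν a - b.2 * ν b) := by
    rw [Fintype.sum_eq_add a b hab.ne fun c hc => by
      rw [Equiv.swap_apply_of_ne_of_ne hc.1 hc.2, sub_self], Equiv.swap_apply_left,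
      Equiv.swap_apply_right]
  have hle := hmin _ swap_mem
  simp only [swap_apply] at hle
  rw [← sub_nonneg, ← Finset.sum_sub_distrib, sum_sub] at hle
  have hpos : (a.2 : ℤ) < b.2 := by
    obtain ⟨k, i, j, hij⟩ := hab
    exact_mod_cast hij
  by_contra! hlt
  have : (ν a : ℤ) < ν b := mod_cast hlt
  nlinarith

theorem two_mul_sum_euler_mul_euler_alternant (G : MvPolynomial (BlockIdx N) R)
    (Q : BlockIdx N → BlockIdx N → MvPolynomial (BlockIdx N) R)
    (hQ : ∀ a b, a < b → (X a - X b) * Q a b = (X a + X b) * (euler a G - euler b G)) :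
    2 * ∑ c, euler c G * euler c (alternant R (staircase N)) =
      (∑ a, ∑ b ∈ Finset.Ioi a, Q a b + ∑ a, ∑ b ∈ Finset.Ioi a, (euler a G + euler b G)) *
        alternant R (staircase N) := by
  let pairs := Finset.univ.sigma fun a : BlockIdx N => Finset.Ioi a
  have vandermonde : alternant R (staircase N) = ∏ p ∈ pairs, (X p.1 - X p.2) :=
    alternant_staircase
  have hsum : ∑ c, euler c G * euler c (alternant R (staircase N)) = ∑ p ∈ pairs,
      (∏ q ∈ pairs.erase p, (X q.1 - X q.2)) * (X p.1 * euler p.1 G - X p.2 * euler p.2 G) := by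
    simp only [vandermonde, euler_prod, Finset.mul_sum]
    rw [Finset.sum_comm]
    refine Finset.sum_congr rfl fun p _ => ?_
    rw [← sum_euler_mul_euler_X, ← sum_euler_mul_euler_X, ← Finset.sum_sub_distrib, Finset.mul_sum]
    refine Finset.sum_congr rfl fun c _ => ?_
    rw [map_sub]; ring
  rw [hsum, ← Finset.sum_add_distrib]
  simp only [← Finset.sum_add_distrib]
  rw [Finset.sum_sigma' Finset.univ (fun a => Finset.Ioi a)
    fun a b => Q a b + (euler a G + euler b G), Finset.mul_sum, Finset.sum_mul]
  refine Finset.sum_congr rfl fun p hp => ?_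
  rw [vandermonde, ← Finset.mul_prod_erase pairs _ hp]
  linear_combination (-∏ q ∈ pairs.erase p, (X q.1 - X q.2)) *
    hQ p.1 p.2 (Finset.mem_Ioi.1 (Finset.mem_sigma.1 hp).2)

/-- This holds because `G` is homogeneous in the variables of each block. -/
theorem sum_euler_add_euler_eq {G : MvPolynomial (BlockIdx N) R} {lam : BlockIdx N →₀ ℕ}
    (hdom : ∀ ν, coeff ν G ≠ 0 → IsDominatedBy ν lam) :
    ∑ a, ∑ b ∈ Finset.Ioi a, (euler a G + euler b G) =
      C ((∑ a, ((N a.1 : ℤ) - 1) * lam a : ℤ) : R) * G := by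
  have hpairs := sum_sameBlock_eq fun a _ : BlockIdx N => euler a G
  rw [← sub_eq_iff_eq_add'] at hpairs
  rw [← hpairs]
  ext ν
  simp only [Finset.sum_const, Finset.card_univ, Fintype.card_fin, coeff_sub, coeff_sum,
    coeff_smul, coeff_euler, coeff_C_mul]
  by_cases h : coeff ν G = 0
  · simp [h]
  rw [← (hdom ν h).sum_eq_of_block fun k => (N k : ℤ) - 1, ← Fintype.sum_sigma'
    (fun k i => N k • ((ν ⟨k, i⟩ : R) * coeff ν G)), ← Finset.sum_sub_distrib]
  push_cast
  rw [Finset.sum_mul]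
  exact Finset.sum_congr rfl fun a _ => by rw [nsmul_eq_mul]; ring

section IsDomain

variable [IsDomain R]

theorem sum_sq_eq_of_laplacian_eq {f : MvPolynomial (BlockIdx N) R} {c : R}
    (hf : laplacian f = C c * f) {ν : BlockIdx N →₀ ℕ} (hν : coeff ν f ≠ 0) :
    ((∑ a, ν a ^ 2 : ℕ) : R) = c := by
  have := congrArg (coeff ν) hf
  rw [coeff_laplacian, coeff_C_mul] at this
  exact mul_right_cancel₀ hν this

variable [CharZero R]

/-- Characterisation of the alternant: a point of the sphere `|ν| = |μ|` that is dominated by `μ`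
and antitone is `μ` itself. -/
theorem eq_alternant_of_laplacian_eq {f : MvPolynomial (BlockIdx N) R} {μ : BlockIdx N →₀ ℕ}
    (hμ : StrictAnti μ) (hf : IsMonicAt f μ) (hanti : ∀ a b, a < b → rename (Equiv.swap a b) f = -f)
    {c : R} (hlap : laplacian f = C c * f) : f = alternant R μ := by
  obtain rfl := sum_sq_eq_of_laplacian_eq hlap (hf.coeff_eq_one ▸ one_ne_zero)
  by_contra hne
  have hdiff_anti : ∀ a b, a < b →
      rename (Equiv.swap a b) (f - alternant R μ) = -(f - alternant R μ) := fun a b hab => by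
    rw [map_sub, hanti a b hab, rename_swap_alternant μ hab]; ring
  have hdiff_lap : laplacian (f - alternant R μ) =
      C ((∑ a, μ a ^ 2 : ℕ) : R) * (f - alternant R μ) := by
    rw [map_sub, hlap, laplacian_alternant, mul_sub]
  obtain ⟨ν, hν, hν_anti⟩ := exists_antitone_of_rename_swap_eq_neg (sub_ne_zero.2 hne) hdiff_anti
  have hdom : IsDominatedBy ν μ := by
    by_cases h : coeff ν f = 0
    · refine (isMonicAt_alternant (R := R) hμ).isDominatedBy ν fun h' => hν ?_
      rw [coeff_sub, h, h', sub_zero]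
    · exact hf.isDominatedBy ν h
  obtain rfl := hdom.eq_of_antitone_of_norm_eq hν_anti
    (mod_cast sum_sq_eq_of_laplacian_eq hdiff_lap hν)
  rw [coeff_sub, hf.coeff_eq_one, (isMonicAt_alternant hμ).coeff_eq_one, sub_self] at hν
  exact hν rfl

/-- Weyl's character formula in the form obtained from the radial part of the Casimir: `Q a b` is
the quotient `(x_a + x_b)(E_a - E_b) G / (x_a - x_b)`. -/
theorem mul_alternant_staircase {G : MvPolynomial (BlockIdx N) R} {lam : BlockIdx N →₀ ℕ}
    (hlam : Antitone lam) (hG : IsMonicAt G lam)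
    (hsymm : ∀ a b, a < b → rename (Equiv.swap a b) G = G)
    (Q : BlockIdx N → BlockIdx N → MvPolynomial (BlockIdx N) R)
    (hQ : ∀ a b, a < b → (X a - X b) * Q a b = (X a + X b) * (euler a G - euler b G))
    {c : R} (hcas : laplacian G + ∑ a, ∑ b ∈ Finset.Ioi a, Q a b = C c * G) :
    G * alternant R (staircase N) = alternant R (lam + staircase N) := by
  refine eq_alternant_of_laplacian_eq (strictAnti_add_staircase hlam)
    (hG.mul (isMonicAt_alternant strictAnti_staircase)) (fun a b hab => ?_)
    (c := c + ((∑ a, ((N a.1 : ℤ) - 1) * lam a : ℤ) : R) + ((∑ a, staircase N a ^ 2 : ℕ) : R)) ?_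
  · rw [map_mul, hsymm a b hab, rename_swap_alternant _ hab, mul_neg]
  · rw [laplacian_mul, two_mul_sum_euler_mul_euler_alternant G Q hQ, laplacian_alternant,
      sum_euler_add_euler_eq hG.isDominatedBy, C_add, C_add]
    linear_combination alternant R (staircase N) * hcas

end IsDomain

end Weyl

/-! ### Operators on tensor powers -/

section Content

variable {I B : Type*} [Fintype I] [DecidableEq B]

/-- The content of the basis tensor `⨂ v_{b s}` of `V^{⊗I}`: the multiplicity of each basis vector
of `V` in it. -/
def count (b : I → B) (a : B) : ℕ := (Finset.univ.filter fun s => b s = a).card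

theorem prod_comp_eq_prod_pow_count {M : Type*} [Fintype B] [CommMonoid M] (b : I → B) (f : B → M) :
    ∏ s, f (b s) = ∏ a, f a ^ count b a := by
  simp only [← Finset.prod_fiberwise' Finset.univ b f, Finset.prod_const, count]

theorem count_perm_comp (σ : Equiv.Perm B) (b : I → B) (a : B) :
    count (σ ∘ b) a = count b (σ⁻¹ a) := by
  simp only [count, Function.comp_apply, Equiv.Perm.eq_inv_iff_eq]

end Content

section Tensor

variable {I B R : Type*} [Fintype I] [DecidableEq I] [Fintype B] [DecidableEq B] [CommRing R]

/-- The matrix of `⨂ A_s` in the basis of `V^{⊗I}` consisting of tensors of basis vectors of `V`. -/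
noncomputable def piTensor : (I → Matrix B B R) →* Matrix (I → B) (I → B) R where
  toFun A := Matrix.of fun b' b => ∏ s, A s (b' s) (b s)
  map_one' := by
    ext b' b
    simp only [Matrix.of_apply, Pi.one_apply, Matrix.one_apply, Finset.prod_ite_zero,
      Finset.prod_const_one, Finset.mem_univ, true_imp_iff, funext_iff]
  map_mul' A A' := by
    ext b' b
    simp only [Matrix.of_apply, Matrix.mul_apply, Pi.mul_apply, ← Finset.prod_mul_distrib]
    rw [Finset.prod_univ_sum, Fintype.piFinset_univ]

theorem piTensor_apply (A : I → Matrix B B R) (b' b : I → B) :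
    piTensor A b' b = ∏ s, A s (b' s) (b s) := rfl

variable (I) in
/-- The diagonal action `g ↦ g ⊗ ⋯ ⊗ g` on `V^{⊗I}`. -/
noncomputable def tensorPower : Matrix B B R →* Matrix (I → B) (I → B) R :=
  piTensor.comp (Pi.constMonoidHom I _)

theorem tensorPower_eq (g : Matrix B B R) : tensorPower I g = piTensor fun _ : I => g := rfl

theorem tensorPower_apply (g : Matrix B B R) (b' b : I → B) :
    tensorPower I g b' b = ∏ s, g (b' s) (b s) := rfl

theorem tensorPower_diagonal (x : B → R) :
    tensorPower I (Matrix.diagonal x) = Matrix.diagonal fun b => ∏ s, x (b s) := by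
  ext b' b
  simp only [tensorPower_apply, Matrix.diagonal_apply, Finset.prod_ite_zero, Finset.mem_univ,
    true_imp_iff, funext_iff]

theorem piTensor_mulSingle_apply (s : I) (A : Matrix B B R) (b' b : I → B) :
    piTensor (Pi.mulSingle s A) b' b = if ∀ r, r ≠ s → b' r = b r then A (b' s) (b s) else 0 := by
  rw [piTensor_apply, ← Finset.mul_prod_erase _ _ (Finset.mem_univ s), Pi.mulSingle_eq_same,
    Finset.prod_congr rfl fun r hr => by
      rw [Pi.mulSingle_eq_of_ne (Finset.ne_of_mem_erase hr), Matrix.one_apply],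
    Finset.prod_ite_zero, Finset.prod_const_one]
  simp only [Finset.mem_erase, Finset.mem_univ, and_true, mul_ite, mul_one, mul_zero]

variable (I) in
/-- The action of `gl(V)` on `V^{⊗I}` by derivations. -/
noncomputable def tensorDer : Matrix B B R →ₗ[R] Matrix (I → B) (I → B) R where
  toFun A := ∑ s, piTensor (Pi.mulSingle s A)
  map_add' A A' := by
    rw [← Finset.sum_add_distrib]
    refine Finset.sum_congr rfl fun s _ => Matrix.ext fun b' b => ?_
    simp only [piTensor_mulSingle_apply, Matrix.add_apply]
    split_ifs <;> simp
  map_smul' c A := by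
    rw [RingHom.id_apply, Finset.smul_sum]
    refine Finset.sum_congr rfl fun s _ => Matrix.ext fun b' b => ?_
    simp only [piTensor_mulSingle_apply, Matrix.smul_apply]
    split_ifs <;> simp

theorem tensorDer_eq (A : Matrix B B R) :
    tensorDer I A = ∑ s, piTensor (Pi.mulSingle s A) := rfl

theorem tensorPower_mul_tensorDer {g A A' : Matrix B B R} (h : g * A = A' * g) :
    tensorPower I g * tensorDer I A = tensorDer I A' * tensorPower I g := by
  simp only [tensorDer_eq, Finset.mul_sum, Finset.sum_mul, tensorPower_eq, ← map_mul]
  refine Finset.sum_congr rfl fun s _ => congrArg _ (funext fun r => ?_)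
  rcases eq_or_ne r s with rfl | hr
  · simp [h]
  · simp [Pi.mulSingle_eq_of_ne hr]

theorem tensorDer_mul_sub_mul (A A' : Matrix B B R) :
    tensorDer I A * tensorDer I A' - tensorDer I A' * tensorDer I A =
      tensorDer I (A * A' - A' * A) := by
  rw [map_sub]
  simp only [tensorDer_eq, Finset.sum_mul_sum, ← map_mul]
  rw [Finset.sum_comm, ← Finset.sum_sub_distrib, ← Finset.sum_sub_distrib]
  refine Finset.sum_congr rfl fun s _ => ?_
  rw [← Finset.sum_sub_distrib, Fintype.sum_eq_single s, Pi.mulSingle_mul, Pi.mulSingle_mul]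
  intro r hr
  have hcomm := Pi.mulSingle_commute (f := fun _ : I => Matrix B B R) hr A A'
  rw [sub_eq_zero, hcomm.eq]

variable (I R) in
/-- The action on `V^{⊗I}` of the elementary matrix with a `1` in row `a` and column `c`. -/
noncomputable def elemOp (a c : B) : Matrix (I → B) (I → B) R :=
  tensorDer I (Matrix.single a c 1)

theorem elemOp_mul_sub_mul (a c a' c' : B) :
    elemOp I R a c * elemOp I R a' c' - elemOp I R a' c' * elemOp I R a c =
      (if c = a' then elemOp I R a c' else 0) - if c' = a then elemOp I R a' c else 0 := by
  simp only [elemOp, tensorDer_mul_sub_mul, map_sub]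
  congr 1
  · split_ifs with h
    · rw [h, Matrix.single_mul_single_same, one_mul]
    · rw [Matrix.single_mul_single_of_ne _ _ _ _ h, map_zero]
  · split_ifs with h
    · rw [h, Matrix.single_mul_single_same, one_mul]
    · rw [Matrix.single_mul_single_of_ne _ _ _ _ h, map_zero]

theorem tensorDer_eq_sum (A : Matrix B B R) :
    tensorDer I A = ∑ a, ∑ c, A a c • elemOp I R a c := by
  conv_lhs => rw [Matrix.matrix_eq_sum_single A]
  simp only [map_sum, elemOp, ← map_smul, Matrix.smul_single, smul_eq_mul, mul_one]

theorem elemOp_self (a : B) : elemOp I R a a = Matrix.diagonal fun b => (count b a : R) := by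
  ext b' b
  rw [elemOp, tensorDer_eq, Matrix.sum_apply]
  simp only [piTensor_mulSingle_apply, Matrix.single_apply, Matrix.diagonal_apply]
  by_cases h : b' = b
  · subst h
    simp [count, eq_comm]
  · rw [if_neg h]
    refine Finset.sum_eq_zero fun s _ => ?_
    split_ifs with hne hs
    · refine absurd (funext fun r => ?_) h
      rcases eq_or_ne r s with rfl | hr
      exacts [hs.1.symm.trans hs.2, hne r hr]
    · rfl
    · rfl

theorem smul_tensorPower_diagonal_mul_elemOp (x : B → R) (a c : B) :
    x c • (tensorPower I (Matrix.diagonal x) * elemOp I R a c) =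
      x a • (elemOp I R a c * tensorPower I (Matrix.diagonal x)) := by
  rw [← mul_smul_comm, ← smul_mul_assoc, elemOp, ← map_smul, ← map_smul]
  refine tensorPower_mul_tensorDer ?_
  ext a' c'
  simp only [Matrix.diagonal_mul, Matrix.mul_diagonal, Matrix.smul_apply, Matrix.single_apply,
    smul_eq_mul, mul_ite, ite_mul, mul_one, mul_zero, zero_mul]
  split_ifs with h
  · rw [h.1, h.2, mul_comm]
  · rfl

theorem tensorPower_one_add_smul (t : R) (A : Matrix B B R) :
    tensorPower I (1 + t • A) = ∑ k ∈ Finset.range (Fintype.card I + 1),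
      t ^ k • ∑ S ∈ Finset.powersetCard k Finset.univ,
        piTensor (S.piecewise (fun _ => A) 1) := by
  have expand : tensorPower I (1 + t • A) = ∑ S ∈ (Finset.univ : Finset I).powerset,
      t ^ S.card • piTensor (S.piecewise (fun _ => A) 1) := by
    ext b' b
    simp only [tensorPower_apply, add_comm (1 : Matrix B B R), Matrix.add_apply, Matrix.smul_apply,
      Finset.prod_add, Matrix.sum_apply, piTensor_apply, smul_eq_mul, Finset.prod_mul_distrib,
      Finset.prod_const]
    refine Finset.sum_congr rfl fun S _ => ?_
    rw [mul_assoc,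
      ← Finset.prod_mul_prod_compl S fun s => S.piecewise (fun _ => A) 1 s (b' s) (b s),
      Finset.compl_eq_univ_sdiff]
    congr 2
    · exact Finset.prod_congr rfl fun s hs => by rw [Finset.piecewise_eq_of_mem _ _ _ hs]
    · exact Finset.prod_congr rfl fun s hs => by
        rw [Finset.piecewise_eq_of_notMem _ _ _ (Finset.mem_sdiff.1 hs).2, Pi.one_apply]
  rw [expand, Finset.sum_powerset, Finset.card_univ]
  refine Finset.sum_congr rfl fun k _ => ?_
  rw [Finset.smul_sum]
  exact Finset.sum_congr rfl fun S hS => by rw [(Finset.mem_powersetCard.1 hS).2]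

theorem sum_powersetCard_one_piTensor (A : Matrix B B R) :
    ∑ S ∈ Finset.powersetCard 1 (Finset.univ : Finset I), piTensor (S.piecewise (fun _ => A) 1) =
      tensorDer I A := by
  rw [Finset.powersetCard_one, Finset.sum_map, tensorDer_eq]
  refine Finset.sum_congr rfl fun s _ => congrArg _ (funext fun r => ?_)
  rcases eq_or_ne r s with rfl | hr
  · simp
  · simp [hr]

end Tensor

section Field

variable {I B 𝕜 : Type*} [Fintype I] [DecidableEq I] [Fintype B] [DecidableEq B] [Field 𝕜]

theorem mem_of_forall_sum_pow_smul_mem [Infinite 𝕜] {V : Type*} [AddCommGroup V] [Module 𝕜 V]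
    (S : Submodule 𝕜 V) (N : ℕ) (w : ℕ → V)
    (h : ∀ t : 𝕜, ∑ k ∈ Finset.range N, t ^ k • w k ∈ S) {k : ℕ} (hk : k < N) : w k ∈ S := by
  by_contra hw
  obtain ⟨f, hf, hS⟩ := Submodule.exists_le_ker_of_notMem hw
  have hzero : ∑ k ∈ Finset.range N, Polynomial.monomial k (f (w k)) = 0 := by
    refine Polynomial.funext fun t => ?_
    have := hS (h t)
    simp only [LinearMap.mem_ker, map_sum, map_smul, smul_eq_mul] at this
    simpa only [Polynomial.eval_finsetSum, Polynomial.eval_monomial, mul_comm, Polynomial.eval_zero]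
  have := congrArg (Polynomial.coeff · k) hzero
  simp only [Polynomial.finsetSum_coeff, Polynomial.coeff_monomial, Polynomial.coeff_zero] at this
  rw [Finset.sum_ite_eq', if_pos (Finset.mem_range.2 hk)] at this
  exact hf this

theorem tensorDer_mulVec_mem_of_forall_tensorPower [Infinite 𝕜] {A : Matrix B B 𝕜}
    {S : Submodule 𝕜 ((I → B) → 𝕜)} {u : (I → B) → 𝕜}
    (h : ∀ t : 𝕜, (tensorPower I (1 + t • A)).mulVec u ∈ S) : (tensorDer I A).mulVec u ∈ S := by
  rcases isEmpty_or_nonempty I with hI | hI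
  · simp [tensorDer_eq]
  rw [← sum_powersetCard_one_piTensor]
  refine mem_of_forall_sum_pow_smul_mem S (Fintype.card I + 1) (fun k => Matrix.mulVec
    (∑ S ∈ Finset.powersetCard k Finset.univ, piTensor (S.piecewise (fun _ => A) 1)) u)
    (fun t => ?_) (k := 1) (by have := Fintype.card_pos (α := I); omega)
  simpa only [tensorPower_one_add_smul, Matrix.sum_mulVec, Matrix.smul_mulVec] using h t

/-- The substitution `X_s ↦ 1 ⊗ ⋯ ⊗ g ⊗ ⋯ ⊗ 1` (`g` in position `s`). -/
noncomputable def tensorEval (g : Matrix B B 𝕜) :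
    MvPolynomial I 𝕜 →ₐ[𝕜] Matrix (I → B) (I → B) 𝕜 :=
  AddMonoidAlgebra.lift 𝕜 _ (I →₀ ℕ)
    { toFun := fun μ => piTensor fun s => g ^ (Multiplicative.toAdd μ s)
      map_one' := map_one piTensor
      map_mul' := fun μ ν => by
        rw [← map_mul]
        exact congrArg _ (funext fun s => pow_add g _ _) }

theorem tensorEval_monomial (g : Matrix B B 𝕜) (μ : I →₀ ℕ) :
    tensorEval g (monomial μ 1) = piTensor fun s => g ^ μ s :=
  (AddMonoidAlgebra.lift_single _ _ _).trans (one_smul _ _)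

theorem tensorEval_psum (g : Matrix B B 𝕜) (k : ℕ) :
    tensorEval g (psum I 𝕜 k) = tensorDer I (g ^ k) := by
  simp only [psum, map_sum, X_pow_eq_monomial, tensorEval_monomial, tensorDer_eq]
  refine Finset.sum_congr rfl fun s _ => congrArg _ (funext fun r => ?_)
  rcases eq_or_ne r s with rfl | hr
  · simp
  · simp [Pi.mulSingle_eq_of_ne hr, Finsupp.single_eq_of_ne hr]

theorem tensorEval_esymm_card (g : Matrix B B 𝕜) :
    tensorEval g (esymm I 𝕜 (Fintype.card I)) = tensorPower I g := by
  have hesymm : esymm I 𝕜 (Fintype.card I) =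
      monomial (Finsupp.equivFunOnFinite.symm fun _ => 1) 1 := by
    rw [esymm, ← Finset.card_univ, Finset.powersetCard_self, Finset.sum_singleton, monomial_eq]
    simp [Finsupp.prod_fintype]
  rw [hesymm, tensorEval_monomial, tensorPower_eq]
  simp

/-- Newton's identities express `g ⊗ ⋯ ⊗ g`, an elementary symmetric polynomial in the commuting
operators `1 ⊗ ⋯ ⊗ g ⊗ ⋯ ⊗ 1`, through the power sums of these operators. -/
theorem tensorPower_mem_of_tensorDer_pow_mem [CharZero 𝕜] {g : Matrix B B 𝕜}
    {A : Subalgebra 𝕜 (Matrix (I → B) (I → B) 𝕜)} (h : ∀ k, tensorDer I (g ^ k) ∈ A) :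
    tensorPower I g ∈ A := by
  suffices ∀ k, esymm I 𝕜 k ∈ A.comap (tensorEval g) by
    rw [← tensorEval_esymm_card]
    exact this _
  intro k
  induction k using Nat.strong_induction_on with
  | _ k ih =>
    rcases Nat.eq_zero_or_pos k with rfl | hk
    · rw [esymm_zero]
      exact one_mem _
    have newton : esymm I 𝕜 k = (k : 𝕜)⁻¹ • ((k : MvPolynomial I 𝕜) * esymm I 𝕜 k) := by
      rw [← nsmul_eq_mul, ← Nat.cast_smul_eq_nsmul 𝕜, inv_smul_smul₀ (Nat.cast_ne_zero.2 hk.ne')]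
    rw [newton, mul_esymm_eq_sum]
    refine Subalgebra.smul_mem _ (mul_mem (pow_mem (neg_mem (one_mem _)) _)
      (sum_mem fun a ha => ?_)) _
    refine mul_mem (mul_mem (pow_mem (neg_mem (one_mem _)) _) (ih _ (Finset.mem_filter.1 ha).2)) ?_
    rw [Subalgebra.mem_comap, tensorEval_psum]
    exact h _

end Field

/-! ### Traces on invariant subspaces -/

section SubTrace

variable {T 𝕜 : Type*} [Fintype T] [DecidableEq T] [Field 𝕜]

/-- The algebra of matrices that map the subspace `S` to itself. -/
def stabilizer (S : Submodule 𝕜 (T → 𝕜)) : Subalgebra 𝕜 (Matrix T T 𝕜) where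
  carrier := {A | ∀ u ∈ S, A.mulVec u ∈ S}
  mul_mem' hA hA' u hu := by
    rw [← Matrix.mulVec_mulVec]
    exact hA _ (hA' u hu)
  add_mem' hA hA' u hu := by
    rw [Matrix.add_mulVec]
    exact S.add_mem (hA u hu) (hA' u hu)
  algebraMap_mem' c u hu := by
    rw [Algebra.algebraMap_eq_smul_one, Matrix.smul_mulVec, Matrix.one_mulVec]
    exact S.smul_mem c hu

theorem mem_stabilizer_span {A : Matrix T T 𝕜} {s : Set (T → 𝕜)}
    (h : ∀ u ∈ s, A.mulVec u ∈ Submodule.span 𝕜 s) : A ∈ stabilizer (Submodule.span 𝕜 s) :=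
  (Submodule.span_le (p := (Submodule.span 𝕜 s).comap A.mulVecLin)).2 h

/-- The trace of the compression of a matrix to the subspace `S`, along some complement of `S`; for
matrices in `stabilizer S` this is the trace of the restriction. -/
noncomputable def subTrace (S : Submodule 𝕜 (T → 𝕜)) : Matrix T T 𝕜 →ₗ[𝕜] 𝕜 :=
  LinearMap.trace 𝕜 S ∘ₗ
    LinearMap.llcomp 𝕜 S (T → 𝕜) S
        (S.subtype.exists_leftInverse_of_injective S.ker_subtype).choose ∘ₗ
      LinearMap.lcomp 𝕜 (T → 𝕜) S.subtype ∘ₗ Matrix.toLin'.toLinearMap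

theorem exists_subTrace_eq (S : Submodule 𝕜 (T → 𝕜)) : ∃ p : (T → 𝕜) →ₗ[𝕜] S,
    (∀ u : S, p u = u) ∧
      ∀ A, subTrace S A = LinearMap.trace 𝕜 S (p ∘ₗ A.mulVecLin ∘ₗ S.subtype) :=
  ⟨_, LinearMap.congr_fun (S.subtype.exists_leftInverse_of_injective S.ker_subtype).choose_spec,
    fun _ => rfl⟩

variable {S : Submodule 𝕜 (T → 𝕜)} {A A' : Matrix T T 𝕜}

theorem subTrace_eq_trace_restrict (hA : ∀ u ∈ S, A.mulVecLin u ∈ S) :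
    subTrace S A = LinearMap.trace 𝕜 S (A.mulVecLin.restrict hA) := by
  obtain ⟨p, hp, htrace⟩ := exists_subTrace_eq S
  rw [htrace]
  congr 1
  ext1 u
  exact hp ⟨_, hA u u.2⟩

theorem subTrace_mul_congr (M : Matrix T T 𝕜) (h : ∀ u ∈ S, A.mulVec u = A'.mulVec u) :
    subTrace S (M * A) = subTrace S (M * A') := by
  obtain ⟨p, -, htrace⟩ := exists_subTrace_eq S
  rw [htrace, htrace]
  congr 1
  ext1 u
  simp only [LinearMap.comp_apply, Matrix.mulVecLin_apply, Submodule.subtype_apply,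
    ← Matrix.mulVec_mulVec, h u u.2]

theorem subTrace_mul_comm (hA : A ∈ stabilizer S) (hA' : A' ∈ stabilizer S) :
    subTrace S (A * A') = subTrace S (A' * A) := by
  rw [subTrace_eq_trace_restrict (mul_mem hA hA'), subTrace_eq_trace_restrict (mul_mem hA' hA)]
  have restrict_mul {M M' : Matrix T T 𝕜} (hM : M ∈ stabilizer S) (hM' : M' ∈ stabilizer S) :
      (M * M').mulVecLin.restrict (mul_mem hM hM' : M * M' ∈ stabilizer S) =
        M.mulVecLin.restrict hM * M'.mulVecLin.restrict hM' := by
    ext1 u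
    exact Subtype.ext (Matrix.mulVec_mulVec _ _ _).symm
  rw [restrict_mul hA hA', restrict_mul hA' hA, LinearMap.trace_mul_comm]

theorem trace_eq_one_of_isProj_span_singleton {V : Type*} [AddCommGroup V] [Module 𝕜 V]
    [FiniteDimensional 𝕜 V] {f : V →ₗ[𝕜] V} {v : V} (hv : v ≠ 0)
    (hf : LinearMap.IsProj (Submodule.span 𝕜 {v}) f) : LinearMap.trace 𝕜 V f = 1 := by
  rw [hf.trace, finrank_span_singleton hv, Nat.cast_one]

theorem subTrace_eq_one_of_forall_mem_span_singleton {v : T → 𝕜} (hv : v ∈ S) (hv0 : v ≠ 0)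
    (hAv : A.mulVec v = v) (h : ∀ u ∈ S, A.mulVec u ∈ Submodule.span 𝕜 {v}) :
    subTrace S A = 1 := by
  have hA : ∀ u ∈ S, A.mulVecLin u ∈ S := fun u hu =>
    (Submodule.span_singleton_le_iff_mem v S).2 hv (h u hu)
  rw [subTrace_eq_trace_restrict hA]
  refine trace_eq_one_of_isProj_span_singleton (v := ⟨v, hv⟩)
    (fun h => hv0 (congrArg Subtype.val h)) ⟨fun u => ?_, fun u hu => ?_⟩
  · obtain ⟨z, hz⟩ := Submodule.mem_span_singleton.1 (h u u.2)
    exact Submodule.mem_span_singleton.2 ⟨z, Subtype.ext hz⟩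
  · obtain ⟨z, rfl⟩ := Submodule.mem_span_singleton.1 hu
    rw [map_smul]
    exact congrArg _ (Subtype.ext hAv)

theorem subTrace_mul_mul_comm_of_commute_add {Y M N : Matrix T T 𝕜} (hY : Y ∈ stabilizer S)
    (hM : M ∈ stabilizer S) (hN : N ∈ stabilizer S) (hMAN : Commute M (A + N))
    (hYN : Commute Y N) : subTrace S (Y * (M * A)) = subTrace S (Y * (A * M)) := by
  have hrest : subTrace S (Y * (M * N)) = subTrace S (Y * (N * M)) := by
    rw [← mul_assoc, subTrace_mul_comm (mul_mem hY hM) hN, ← mul_assoc, ← hYN.eq, mul_assoc]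
  have hsum := congrArg (fun Z => subTrace S (Y * Z)) hMAN.eq
  simp only [mul_add, add_mul, map_add, hrest] at hsum
  exact add_right_cancel hsum

end SubTrace

/-! ### Highest weight modules in tensor powers -/

theorem commute_casimir {ι A : Type*} [Fintype ι] [DecidableEq ι] [Ring A] {e : ι → ι → A}
    (h : ∀ a c a' c', e a c * e a' c' - e a' c' * e a c =
      (if c = a' then e a c' else 0) - if c' = a then e a' c else 0) (c d : ι) :
    Commute (∑ a, ∑ b, e a b * e b a) (e c d) := by
  have leibniz (a b : ι) : e a b * e b a * e c d - e c d * (e a b * e b a) =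
      e a b * ((if a = c then e b d else 0) - if d = b then e c a else 0) +
        ((if b = c then e a d else 0) - if d = a then e c b else 0) * e b a := by
    rw [← h, ← h]
    noncomm_ring
  rw [commute_iff_eq, ← sub_eq_zero]
  simp only [Finset.sum_mul, Finset.mul_sum, ← Finset.sum_sub_distrib, leibniz]
  simp only [mul_sub, sub_mul, mul_ite, ite_mul, mul_zero, zero_mul, Finset.sum_add_distrib,
    Finset.sum_sub_distrib, Finset.sum_ite_irrel, Finset.sum_const_zero, Finset.sum_ite_eq,
    Finset.sum_ite_eq', Finset.mem_univ, if_true]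
  abel

variable {I B K 𝕜 : Type*} {m : K → ℕ}

theorem fst_eq_of_lt {a c : BlockIdx m} (h : a < c) : a.1 = c.1 := by
  obtain ⟨k, i, j, hij⟩ := h
  rfl

theorem lt_trichotomy_of_fst_eq {a c : BlockIdx m} (h : a.1 = c.1) : a < c ∨ a = c ∨ c < a := by
  obtain ⟨k, i⟩ := a
  obtain ⟨l, j⟩ := c
  obtain rfl : k = l := h
  simpa only [Sigma.mk_lt_mk_iff, Sigma.mk.injEq, heq_eq_eq, true_and] using lt_trichotomy i j

variable [Fintype I] [DecidableEq I] [Fintype B] [DecidableEq B] [Fintype K] [DecidableEq K]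

section Weight

variable [Field 𝕜]

/-- `u` is a vector of weight `ω` for the diagonal torus of `GL(V)`. -/
def IsWeightVec (ω : B → ℤ) (u : (I → B) → 𝕜) : Prop :=
  ∀ a, (elemOp I 𝕜 a a).mulVec u = (ω a : 𝕜) • u

theorem IsWeightVec.elemOp_mulVec {ω : B → ℤ} {u : (I → B) → 𝕜} (h : IsWeightVec ω u) (c d : B) :
    IsWeightVec (ω + Pi.single c 1 - Pi.single d 1) ((elemOp I 𝕜 c d).mulVec u) := by
  intro a
  have hbracket : elemOp I 𝕜 a a * elemOp I 𝕜 c d - elemOp I 𝕜 c d * elemOp I 𝕜 a a =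
      ((if a = c then 1 else 0) - if a = d then 1 else 0 : 𝕜) • elemOp I 𝕜 c d := by
    rw [elemOp_mul_sub_mul, sub_smul, ite_smul, ite_smul, one_smul, zero_smul]
    congr 1 <;> split_ifs <;> simp_all
  have happly := congrArg (Matrix.mulVec · u) hbracket
  simp only [Matrix.sub_mulVec, ← Matrix.mulVec_mulVec, h a, Matrix.mulVec_smul,
    Matrix.smul_mulVec] at happly
  rw [eq_add_of_sub_eq happly, ← add_smul]
  simp only [Pi.sub_apply, Pi.add_apply, Pi.single_apply, Int.cast_sub, Int.cast_add, Int.cast_ite,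
    Int.cast_one, Int.cast_zero]
  congr 1
  ring

theorem IsWeightVec.count_eq [CharZero 𝕜] {ω : B → ℤ} {u : (I → B) → 𝕜} (h : IsWeightVec ω u)
    {b : I → B} (hb : u b ≠ 0) (a : B) : (count b a : ℤ) = ω a := by
  have hcoord := congrFun (h a) b
  rw [elemOp_self, Matrix.mulVec_diagonal, Pi.smul_apply, smul_eq_mul] at hcoord
  exact_mod_cast mul_right_cancel₀ hb hcoord

variable (I 𝕜) in
/-- The projection of `V^{⊗I}` onto the space of vectors of weight `μ`. -/
noncomputable def weightProj (μ : B → ℕ) : Matrix (I → B) (I → B) 𝕜 :=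
  Matrix.diagonal fun b => if count b = μ then 1 else 0

theorem IsWeightVec.weightProj_mulVec [CharZero 𝕜] {ω : B → ℤ} {u : (I → B) → 𝕜}
    (h : IsWeightVec ω u) (μ : B → ℕ) :
    (weightProj I 𝕜 μ).mulVec u = if (fun a => (μ a : ℤ)) = ω then u else 0 := by
  ext b
  rw [weightProj, Matrix.mulVec_diagonal, ite_mul, one_mul, zero_mul]
  by_cases hb : u b = 0
  · split_ifs <;> simp [hb]
  have hiff : count b = μ ↔ (fun a => (μ a : ℤ)) = ω := by
    simp only [funext_iff, ← h.count_eq hb, Nat.cast_inj, eq_comm]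
  simp only [hiff]
  split_ifs <;> rfl

end Weight

theorem isUnit_one_add_smul_single [Field 𝕜] {a c : B} (hac : a ≠ c) (t : 𝕜) :
    IsUnit (1 + t • Matrix.single a c (1 : 𝕜)) := by
  have hsq : (t • Matrix.single a c (1 : 𝕜)) ^ 2 = 0 := by
    rw [sq, smul_mul_smul_comm, Matrix.single_mul_single_of_ne _ _ _ _ hac.symm, smul_zero]
  exact IsNilpotent.isUnit_one_add ⟨2, hsq⟩

section BlockDiagonal

variable [Field 𝕜]

/-- The algebra of block-diagonal matrices, i.e. `∏ k, gl (m k)`. -/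
def blockDiagonal (m : K → ℕ) (𝕜 : Type*) [Field 𝕜] :
    Subalgebra 𝕜 (Matrix (BlockIdx m) (BlockIdx m) 𝕜) where
  carrier := {g | ∀ a c, a.1 ≠ c.1 → g a c = 0}
  mul_mem' hg hg' a c hac := by
    rw [Matrix.mul_apply]
    refine Finset.sum_eq_zero fun b _ => ?_
    rcases ne_or_eq a.1 b.1 with hab | hab
    · rw [hg a b hab, zero_mul]
    · rw [hg' b c (hab ▸ hac), mul_zero]
  add_mem' hg hg' a c hac := by rw [Matrix.add_apply, hg a c hac, hg' a c hac, add_zero]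
  algebraMap_mem' z a c hac := by
    rw [Matrix.algebraMap_matrix_apply, if_neg fun h => hac (congrArg _ h)]

theorem single_mem_blockDiagonal {a c : BlockIdx m} (h : a.1 = c.1) (z : 𝕜) :
    Matrix.single a c z ∈ blockDiagonal m 𝕜 := by
  intro a' c' h'
  refine Matrix.single_apply_of_ne _ _ _ _ _ ?_
  rintro ⟨rfl, rfl⟩
  exact h' h

end BlockDiagonal

/-- The vectors obtained from `v` by applying lowering operators successively. -/
inductive IsDescendant [Field 𝕜] (v : (I → BlockIdx m) → 𝕜) : ((I → BlockIdx m) → 𝕜) → Prop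
  | refl : IsDescendant v v
  | lower {u : (I → BlockIdx m) → 𝕜} {a c : BlockIdx m} (hu : IsDescendant v u) (hca : c < a) :
    IsDescendant v ((elemOp I 𝕜 a c).mulVec u)

/-- The span of the descendants of `v`; for a highest weight vector, this is the module it
generates. -/
def descendantSpan [Field 𝕜] (v : (I → BlockIdx m) → 𝕜) : Submodule 𝕜 ((I → BlockIdx m) → 𝕜) :=
  Submodule.span 𝕜 {u | IsDescendant v u}

/-- `v` is a highest weight vector of weight `lam` for `∏ k, gl (m k)`. -/
structure IsHighestWeightVec [Field 𝕜] (lam : BlockIdx m → ℕ) (v : (I → BlockIdx m) → 𝕜) :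
    Prop where
  ne_zero : v ≠ 0
  raising {a c : BlockIdx m} : a < c → (elemOp I 𝕜 a c).mulVec v = 0
  weight : IsWeightVec (fun a => (lam a : ℤ)) v

theorem mem_descendantSpan_self [Field 𝕜] (v : (I → BlockIdx m) → 𝕜) : v ∈ descendantSpan v :=
  Submodule.subset_span IsDescendant.refl

theorem elemOp_mem_stabilizer_of_lt [Field 𝕜] (v : (I → BlockIdx m) → 𝕜) {a c : BlockIdx m}
    (hca : c < a) : elemOp I 𝕜 a c ∈ stabilizer (descendantSpan v) :=
  mem_stabilizer_span fun _ hu => Submodule.subset_span (IsDescendant.lower hu hca)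

namespace IsHighestWeightVec

variable [Field 𝕜] {lam : BlockIdx m → ℕ} {v : (I → BlockIdx m) → 𝕜}

theorem elemOp_mulVec_mem (hv : IsHighestWeightVec lam v) {u : (I → BlockIdx m) → 𝕜}
    (hu : IsDescendant v u) {a c : BlockIdx m} (hac : a.1 = c.1) :
    (elemOp I 𝕜 a c).mulVec u ∈ descendantSpan v := by
  induction hu generalizing a c with
  | refl =>
    rcases lt_trichotomy_of_fst_eq hac with hlt | rfl | hlt
    · rw [hv.raising hlt]
      exact zero_mem _
    · rw [hv.weight a]
      exact Submodule.smul_mem _ _ (mem_descendantSpan_self v)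
    · exact Submodule.subset_span (IsDescendant.lower .refl hlt)
  | @lower u a' c' _ hlt ih =>
    have hbracket := congrArg (Matrix.mulVec · u) (elemOp_mul_sub_mul (I := I) (R := 𝕜) a c a' c')
    simp only [Matrix.sub_mulVec, ← Matrix.mulVec_mulVec] at hbracket
    rw [eq_add_of_sub_eq hbracket]
    refine add_mem (sub_mem ?_ ?_) (elemOp_mem_stabilizer_of_lt v hlt _ (ih hac))
    · split_ifs with h
      · exact ih (hac.trans (h ▸ (fst_eq_of_lt hlt).symm))
      · simp
    · split_ifs with h
      · exact ih ((fst_eq_of_lt hlt).symm.trans (h ▸ hac))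
      · simp

theorem elemOp_mem_stabilizer (hv : IsHighestWeightVec lam v) {a c : BlockIdx m}
    (hac : a.1 = c.1) : elemOp I 𝕜 a c ∈ stabilizer (descendantSpan v) :=
  mem_stabilizer_span fun _ hu => hv.elemOp_mulVec_mem hu hac

theorem tensorDer_mem_stabilizer (hv : IsHighestWeightVec lam v)
    {g : Matrix (BlockIdx m) (BlockIdx m) 𝕜} (hg : g ∈ blockDiagonal m 𝕜) :
    tensorDer I g ∈ stabilizer (descendantSpan v) := by
  rw [tensorDer_eq_sum]
  refine sum_mem fun a _ => sum_mem fun c _ => ?_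
  by_cases hac : a.1 = c.1
  · exact Subalgebra.smul_mem _ (hv.elemOp_mem_stabilizer hac) _
  · rw [hg a c hac, zero_smul]
    exact zero_mem _

theorem exists_isWeightVec (hv : IsHighestWeightVec lam v) {u : (I → BlockIdx m) → 𝕜}
    (hu : IsDescendant v u) : ∃ ω : BlockIdx m → ℤ, IsWeightVec ω u ∧
      (∀ y : BlockIdx m → ℤ, Antitone y → ∑ a, y a * ω a ≤ ∑ a, y a * lam a) ∧
      (u = v ∧ ω = (fun a => (lam a : ℤ)) ∨ ∑ a, (a.2 : ℤ) * lam a < ∑ a, (a.2 : ℤ) * ω a) := by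
  induction hu with
  | refl => exact ⟨_, hv.weight, fun _ _ => le_rfl, .inl ⟨rfl, rfl⟩⟩
  | @lower u a c _ hca ih =>
    obtain ⟨ω, hω, hdom, hpos⟩ := ih
    have sum_shift (y : BlockIdx m → ℤ) :
        ∑ b, y b * (ω + Pi.single a 1 - Pi.single c 1 : BlockIdx m → ℤ) b =
          ∑ b, y b * ω b + y a - y c := by
      simp [mul_sub, mul_add, Finset.sum_sub_distrib, Finset.sum_add_distrib, Pi.single_apply]
    refine ⟨_, hω.elemOp_mulVec a c, fun y hy => ?_, .inr ?_⟩
    · rw [sum_shift]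
      linarith [hdom y hy, hy hca.le]
    · have hlt : (c.2 : ℤ) < a.2 := by
        obtain ⟨k, i, j, hij⟩ := hca
        exact_mod_cast hij
      rw [sum_shift fun b => (b.2 : ℤ)]
      rcases hpos with ⟨-, rfl⟩ | hpos <;> linarith

variable [CharZero 𝕜]

theorem tensorPower_mem_stabilizer (hv : IsHighestWeightVec lam v)
    {g : Matrix (BlockIdx m) (BlockIdx m) 𝕜} (hg : g ∈ blockDiagonal m 𝕜) :
    tensorPower I g ∈ stabilizer (descendantSpan v) :=
  tensorPower_mem_of_tensorDer_pow_mem fun k => hv.tensorDer_mem_stabilizer (pow_mem hg k)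

theorem span_tensorPower_eq_descendantSpan (hv : IsHighestWeightVec lam v) :
    Submodule.span 𝕜 {u | ∃ g ∈ blockDiagonal m 𝕜, IsUnit g ∧ u = (tensorPower I g).mulVec v} =
      descendantSpan v := by
  refine le_antisymm (Submodule.span_le.2 ?_) (Submodule.span_le.2 fun u hu => ?_)
  · rintro u ⟨g, hg, -, rfl⟩
    exact hv.tensorPower_mem_stabilizer hg v (mem_descendantSpan_self v)
  induction hu with
  | refl => exact Submodule.subset_span ⟨1, one_mem _, isUnit_one, by simp⟩
  | @lower u a c _ hca ih =>
    refine tensorDer_mulVec_mem_of_forall_tensorPower fun t => mem_stabilizer_span ?_ u ih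
    rintro - ⟨g, hg, hunit, rfl⟩
    rw [Matrix.mulVec_mulVec, ← map_mul]
    refine Submodule.subset_span ⟨_, mul_mem (add_mem (one_mem _) (Subalgebra.smul_mem _
      (single_mem_blockDiagonal (fst_eq_of_lt hca).symm 1) t)) hg,
      (isUnit_one_add_smul_single hca.ne' t).mul hunit, rfl⟩

theorem weightProj_mem_stabilizer (hv : IsHighestWeightVec lam v) (μ : BlockIdx m → ℕ) :
    weightProj I 𝕜 μ ∈ stabilizer (descendantSpan v) :=
  mem_stabilizer_span fun u hu => by
    obtain ⟨ω, hω, -⟩ := hv.exists_isWeightVec hu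
    rw [hω.weightProj_mulVec]
    split_ifs
    exacts [Submodule.subset_span hu, zero_mem _]

theorem weightProj_mulVec_eq_zero (hv : IsHighestWeightVec lam v) {μ : BlockIdx m → ℕ}
    {y : BlockIdx m → ℤ} (hy : Antitone y) (hlt : ∑ a, y a * lam a < ∑ a, y a * μ a)
    {u : (I → BlockIdx m) → 𝕜} (hu : u ∈ descendantSpan v) : (weightProj I 𝕜 μ).mulVec u = 0 := by
  refine LinearMap.eqOn_span (f := (weightProj I 𝕜 μ).mulVecLin) (g := 0) (fun u hu => ?_) hu
  obtain ⟨ω, hω, hdom, -⟩ := hv.exists_isWeightVec hu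
  rw [Matrix.mulVecLin_apply, hω.weightProj_mulVec, if_neg, LinearMap.zero_apply]
  rintro rfl
  exact (hdom y hy).not_gt hlt

theorem weightProj_mulVec_mem_span (hv : IsHighestWeightVec lam v) {u : (I → BlockIdx m) → 𝕜}
    (hu : u ∈ descendantSpan v) : (weightProj I 𝕜 lam).mulVec u ∈ Submodule.span 𝕜 {v} := by
  refine (Submodule.span_le (p := (Submodule.span 𝕜 {v}).comap
    (weightProj I 𝕜 lam).mulVecLin)).2 (fun u hu => ?_) hu
  obtain ⟨ω, hω, -, hpos⟩ := hv.exists_isWeightVec hu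
  rw [SetLike.mem_coe, Submodule.mem_comap, Matrix.mulVecLin_apply, hω.weightProj_mulVec]
  split_ifs with h
  · subst h
    rw [(hpos.resolve_right (lt_irrefl _)).1]
    exact Submodule.mem_span_singleton_self v
  · exact zero_mem _

theorem weightProj_mulVec_self (hv : IsHighestWeightVec lam v) :
    (weightProj I 𝕜 lam).mulVec v = v := by
  rw [hv.weight.weightProj_mulVec, if_pos rfl]

end IsHighestWeightVec

section Casimir

variable [Field 𝕜]

/-- The Casimir element `∑ i j, E_ij E_ji` of the `k`-th factor `gl (m k)`. -/
noncomputable def blockCasimir (I : Type*) [Fintype I] [DecidableEq I] (𝕜 : Type*) [Field 𝕜]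
    (m : K → ℕ) (k : K) : Matrix (I → BlockIdx m) (I → BlockIdx m) 𝕜 :=
  ∑ i : Fin (m k), ∑ j : Fin (m k), elemOp I 𝕜 ⟨k, i⟩ ⟨k, j⟩ * elemOp I 𝕜 ⟨k, j⟩ ⟨k, i⟩

theorem commute_elemOp {a c a' c' : B} (hca : c ≠ a') (hac : c' ≠ a) :
    Commute (elemOp I 𝕜 a c) (elemOp I 𝕜 a' c') := by
  rw [commute_iff_eq, ← sub_eq_zero, elemOp_mul_sub_mul, if_neg hca, if_neg hac, sub_zero]

theorem commute_blockCasimir (k : K) {a c : BlockIdx m} (hac : a.1 = c.1) :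
    Commute (blockCasimir I 𝕜 m k) (elemOp I 𝕜 a c) := by
  obtain ⟨l, i⟩ := a
  obtain ⟨_, j⟩ := c
  obtain rfl := hac
  rcases eq_or_ne k l with rfl | hkl
  · refine commute_casimir (e := fun i j : Fin (m k) => elemOp I 𝕜 (⟨k, i⟩ : BlockIdx m) ⟨k, j⟩)
      (fun a c a' c' => ?_) i j
    rw [elemOp_mul_sub_mul]
    simp only [Sigma.mk.injEq, heq_eq_eq, true_and]
  · have hne (i : Fin (m k)) (j : Fin (m l)) : (⟨k, i⟩ : BlockIdx m) ≠ ⟨l, j⟩ :=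
      fun h => hkl (congrArg Sigma.fst h)
    exact Commute.sum_left _ _ _ fun a _ => Commute.sum_left _ _ _ fun c _ =>
      (commute_elemOp (hne _ _) (hne _ _).symm).mul_left (commute_elemOp (hne _ _) (hne _ _).symm)

namespace IsHighestWeightVec

variable [CharZero 𝕜] {lam : BlockIdx m → ℕ} {v : (I → BlockIdx m) → 𝕜}

theorem elemOp_mulVec_elemOp_mulVec_mem_span (hv : IsHighestWeightVec lam v) {a c : BlockIdx m}
    (hac : a.1 = c.1) :
    (elemOp I 𝕜 a c).mulVec ((elemOp I 𝕜 c a).mulVec v) ∈ Submodule.span 𝕜 {v} := by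
  have hmem := hv.weightProj_mulVec_mem_span (hv.elemOp_mem_stabilizer hac _
    (hv.elemOp_mem_stabilizer hac.symm _ (mem_descendantSpan_self v)))
  rwa [((hv.weight.elemOp_mulVec c a).elemOp_mulVec a c).weightProj_mulVec,
    if_pos (by abel)] at hmem

theorem exists_blockCasimir_mulVec_eq_smul (hv : IsHighestWeightVec lam v) (k : K) :
    ∃ z : 𝕜, ∀ u ∈ descendantSpan v, (blockCasimir I 𝕜 m k).mulVec u = z • u := by
  obtain ⟨z, hz⟩ : ∃ z : 𝕜, z • v = (blockCasimir I 𝕜 m k).mulVec v := by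
    rw [← Submodule.mem_span_singleton]
    simp only [blockCasimir, Matrix.sum_mulVec, ← Matrix.mulVec_mulVec]
    exact sum_mem fun i _ => sum_mem fun j _ => hv.elemOp_mulVec_elemOp_mulVec_mem_span rfl
  suffices h : Set.EqOn (blockCasimir I 𝕜 m k).mulVecLin
      (z • LinearMap.id : ((I → BlockIdx m) → 𝕜) →ₗ[𝕜] _) (descendantSpan v) from
    ⟨z, fun u hu => h hu⟩
  refine LinearMap.eqOn_span fun u hu => ?_
  induction hu with
  | refl => exact hz.symm
  | @lower u a c _ hca ih =>
    rw [Matrix.mulVecLin_apply, Matrix.mulVec_mulVec,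
      (commute_blockCasimir k (fst_eq_of_lt hca).symm).eq, ← Matrix.mulVec_mulVec,
      ← Matrix.mulVecLin_apply (blockCasimir I 𝕜 m k), ih]
    simp [Matrix.mulVec_smul]

end IsHighestWeightVec

end Casimir

/-! ### Permutations of the basis -/

section TensorPerm

variable {I B R : Type*} [Fintype I] [DecidableEq I] [Fintype B] [DecidableEq B] [CommRing R]

variable (I R) in
/-- The action on `V^{⊗I}` of the permutations `e_b ↦ e_{σ b}` of the basis of `V`. -/
noncomputable def tensorPerm : Equiv.Perm B →* Matrix (I → B) (I → B) R where
  toFun σ := tensorPower I (σ⁻¹.permMatrix R)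
  map_one' := by rw [inv_one, Matrix.permMatrix_one, map_one]
  map_mul' σ τ := by rw [mul_inv_rev, Matrix.permMatrix_mul, map_mul]

theorem tensorPerm_eq (σ : Equiv.Perm B) :
    tensorPerm I R σ = tensorPower I (σ⁻¹.permMatrix R) := rfl

theorem tensorPerm_mul_elemOp (σ : Equiv.Perm B) (a c : B) :
    tensorPerm I R σ * elemOp I R a c = elemOp I R (σ a) (σ c) * tensorPerm I R σ := by
  refine tensorPower_mul_tensorDer ?_
  rw [Equiv.Perm.permMatrix, PEquiv.toMatrix_toPEquiv_mul, PEquiv.mul_toMatrix_toPEquiv]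
  ext a' c'
  simp only [Matrix.submatrix_apply, id_eq, Matrix.single_apply, Equiv.Perm.inv_def,
    Equiv.symm_symm, Equiv.eq_symm_apply, σ.injective.eq_iff]

theorem tensorPerm_apply (σ : Equiv.Perm B) (b' b : I → B) :
    tensorPerm I R σ b' b = if b' = σ ∘ b then 1 else 0 := by
  rw [tensorPerm_eq, tensorPower_apply]
  simp only [Equiv.Perm.permMatrix, PEquiv.toMatrix_apply, Equiv.toPEquiv_apply,
    Option.mem_some_iff, Finset.prod_ite_zero, Finset.prod_const_one, Finset.mem_univ,
    true_imp_iff, funext_iff, Function.comp_apply, Equiv.Perm.inv_eq_iff_eq]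

theorem diagonal_mul_tensorPerm (σ : Equiv.Perm B) (f : (I → B) → R) :
    Matrix.diagonal f * tensorPerm I R σ =
      tensorPerm I R σ * Matrix.diagonal fun b => f (σ ∘ b) := by
  ext b' b
  rw [Matrix.diagonal_mul, Matrix.mul_diagonal, tensorPerm_apply]
  split_ifs with h
  · rw [h, mul_comm]
  · simp

theorem tensorPower_diagonal_mul_tensorPerm (σ : Equiv.Perm B) (x : B → R) :
    tensorPower I (Matrix.diagonal x) * tensorPerm I R σ =
      tensorPerm I R σ * tensorPower I (Matrix.diagonal (x ∘ σ)) := by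
  rw [tensorPower_diagonal, tensorPower_diagonal, diagonal_mul_tensorPerm]
  rfl

end TensorPerm

section WeightProj

variable {I B 𝕜 : Type*} [Fintype I] [DecidableEq I] [Fintype B] [DecidableEq B] [Field 𝕜]

theorem weightProj_mul_tensorPerm (σ : Equiv.Perm B) (μ : B → ℕ) :
    weightProj I 𝕜 μ * tensorPerm I 𝕜 σ = tensorPerm I 𝕜 σ * weightProj I 𝕜 (μ ∘ σ) := by
  rw [weightProj, diagonal_mul_tensorPerm, weightProj]
  congr 3 with b
  congr 1
  rw [eq_iff_iff, funext_iff, funext_iff, ← σ.forall_congr_right]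
  simp only [count_perm_comp, Equiv.Perm.inv_def, Equiv.symm_apply_apply, Function.comp_apply]

theorem weightProj_mul_weightProj (μ ν : B → ℕ) :
    weightProj I 𝕜 μ * weightProj I 𝕜 ν = if μ = ν then weightProj I 𝕜 μ else 0 := by
  rw [weightProj, weightProj, Matrix.diagonal_mul_diagonal]
  split_ifs with h
  · subst h
    congr 1 with b
    split_ifs <;> simp
  · rw [← Matrix.diagonal_zero]
    congr 1 with b
    split_ifs with h1 h2 <;> simp_all

theorem weightProj_mul_elemOp_self (μ : B → ℕ) (a : B) :
    weightProj I 𝕜 μ * elemOp I 𝕜 a a = (μ a : 𝕜) • weightProj I 𝕜 μ := by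
  rw [weightProj, elemOp_self, Matrix.diagonal_mul_diagonal, ← Matrix.diagonal_smul]
  congr 1 with b
  rw [Pi.smul_apply, smul_eq_mul]
  split_ifs with h <;> simp [h]

variable (I B) in
/-- The weights occurring in `V^{⊗I}`. -/
noncomputable def weights : Finset (B → ℕ) := Finset.univ.image (count : (I → B) → B → ℕ)

theorem sum_smul_weightProj (f : (B → ℕ) → 𝕜) :
    ∑ μ ∈ weights I B, f μ • weightProj I 𝕜 μ = Matrix.diagonal fun b => f (count b) := by
  ext b' b
  simp only [Matrix.sum_apply, Matrix.smul_apply, weightProj, Matrix.diagonal_apply, smul_eq_mul]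
  split_ifs with h
  · simp [weights]
  · simp

theorem tensorPower_diagonal_eq_sum_weightProj (x : B → 𝕜) :
    tensorPower I (Matrix.diagonal x) =
      ∑ μ ∈ weights I B, (∏ a, x a ^ μ a) • weightProj I 𝕜 μ := by
  simp only [sum_smul_weightProj fun μ => ∏ a, x a ^ μ a, tensorPower_diagonal,
    prod_comp_eq_prod_pow_count]

theorem IsWeightVec.mem_weights [CharZero 𝕜] {μ : B → ℕ} {u : (I → B) → 𝕜}
    (h : IsWeightVec (fun a => (μ a : ℤ)) u) (hu : u ≠ 0) : μ ∈ weights I B := by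
  obtain ⟨b, hb⟩ := Function.ne_iff.1 hu
  exact Finset.mem_image.2 ⟨b, Finset.mem_univ b, funext fun a => mod_cast h.count_eq hb a⟩

end WeightProj

section WeightChar

variable {I B J 𝕜 : Type*} [Fintype I] [DecidableEq I] [Fintype B] [DecidableEq B] [Fintype J]
  [Field 𝕜]

/-- `∑ μ, Tr(A, S_μ) x^μ`, where `S_μ` is the weight space of `S` of weight `μ` and the variables
`x_b` are set to `1` for `b` outside the range of `ι`. -/
noncomputable def weightChar (S : Submodule 𝕜 ((I → B) → 𝕜)) (ι : J → B) :
    Matrix (I → B) (I → B) 𝕜 →ₗ[𝕜] MvPolynomial J 𝕜 :=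
  ∑ μ ∈ weights I B, monomial (Finsupp.equivFunOnFinite.symm (μ ∘ ι)) ∘ₗ subTrace S ∘ₗ
    LinearMap.mulLeft 𝕜 (weightProj I 𝕜 μ)

variable {S : Submodule 𝕜 ((I → B) → 𝕜)} {ι : J → B}

theorem weightChar_apply (A : Matrix (I → B) (I → B) 𝕜) :
    weightChar S ι A = ∑ μ ∈ weights I B,
      monomial (Finsupp.equivFunOnFinite.symm (μ ∘ ι)) (subTrace S (weightProj I 𝕜 μ * A)) := by
  simp [weightChar]

theorem coeff_weightChar [DecidableEq J] (ν : J →₀ ℕ) (A : Matrix (I → B) (I → B) 𝕜) :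
    coeff ν (weightChar S ι A) = ∑ μ ∈ weights I B,
      if Finsupp.equivFunOnFinite.symm (μ ∘ ι) = ν then subTrace S (weightProj I 𝕜 μ * A)
      else 0 := by
  simp only [weightChar_apply, coeff_sum, coeff_monomial]

theorem euler_weightChar (a : J) (A : Matrix (I → B) (I → B) 𝕜) :
    euler a (weightChar S ι A) = weightChar S ι (elemOp I 𝕜 (ι a) (ι a) * A) := by
  ext ν
  rw [coeff_euler]
  simp only [weightChar_apply, coeff_sum, coeff_monomial, Finset.mul_sum, ← mul_assoc,
    weightProj_mul_elemOp_self, smul_mul_assoc, map_smul, smul_eq_mul]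
  refine Finset.sum_congr rfl fun μ _ => ?_
  split_ifs with h
  · rw [← h]
    rfl
  · simp

theorem eval_weightChar (hι : Function.Injective ι) (A : Matrix (I → B) (I → B) 𝕜) (x : J → 𝕜) :
    eval x (weightChar S ι A) =
      subTrace S (tensorPower I (Matrix.diagonal (Function.extend ι x 1)) * A) := by
  have prod_extend (μ : B → ℕ) :
      ∏ a, x a ^ μ (ι a) = ∏ b, Function.extend ι x 1 b ^ μ b :=
    Fintype.prod_of_injective ι hι _ _
      (fun b hb => by rw [Function.extend_apply' _ _ _ hb, Pi.one_apply, one_pow])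
      fun a => by rw [hι.extend_apply]
  rw [weightChar_apply, tensorPower_diagonal_eq_sum_weightProj, Finset.sum_mul, map_sum, map_sum]
  refine Finset.sum_congr rfl fun μ _ => ?_
  rw [eval_monomial, smul_mul_assoc, map_smul, smul_eq_mul, mul_comm, ← prod_extend,
    Finsupp.prod_fintype _ _ fun _ => pow_zero _]
  rfl

end WeightChar

/-! ### Traces twisted by a permutation of the blocks -/

section BlockPerm

variable {K κ : Type*} {m : K → ℕ} {rep : κ → K}

/-- The inclusion of the basis vectors of the blocks chosen by `rep`. -/
def repIdx (m : K → ℕ) (rep : κ → K) : BlockIdx (m ∘ rep) → BlockIdx m :=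
  Sigma.map rep fun _ => id

theorem strictMono_repIdx : StrictMono (repIdx m rep) := by
  rintro _ _ ⟨k, i, j, hij⟩
  exact .fiber _ _ _ hij

theorem antitone_extend_repIdx (hinj : Function.Injective (repIdx m rep))
    {y : BlockIdx (m ∘ rep) → ℤ} (hy : Antitone y) :
    Antitone (Function.extend (repIdx m rep) y 0) := by
  rintro _ _ ⟨k, i, j, hij⟩
  by_cases hk : ∃ l, rep l = k
  · obtain ⟨l, rfl⟩ := hk
    have extend_eq (i : Fin (m (rep l))) :
        Function.extend (repIdx m rep) y 0 ⟨rep l, i⟩ = y ⟨l, i⟩ :=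
      hinj.extend_apply y 0 ⟨l, i⟩
    rw [extend_eq, extend_eq]
    exact hy (show (⟨l, i⟩ : BlockIdx (m ∘ rep)) ≤ ⟨l, j⟩ from .fiber _ _ _ hij)
  · have extend_eq (i : Fin (m k)) : Function.extend (repIdx m rep) y 0 ⟨k, i⟩ = 0 :=
      Function.extend_apply' _ _ _ fun ⟨a, ha⟩ => hk ⟨a.1, congrArg Sigma.fst ha⟩
    rw [extend_eq, extend_eq]

/-- `σ` permutes the blocks, monotonically on each of them, in such a way that the translates of the
blocks chosen by `rep` under `1, σ, …, σ^(h-1)` make up the whole basis. -/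
structure IsBlockPerm (σ : Equiv.Perm (BlockIdx m)) (rep : κ → K) (h : ℕ) : Prop where
  strictMono : StrictMono σ
  pow_eq_one : σ ^ h = 1
  bijective : Function.Bijective fun q : Fin h × BlockIdx (m ∘ rep) =>
    (σ ^ (q.1 : ℕ)) (repIdx m rep q.2)

theorem apply_pow_of_comp_eq {B M : Type*} {σ : Equiv.Perm B} {μ : B → M} (hμ : μ ∘ σ = μ) (i : ℕ)
    (b : B) : μ ((σ ^ i) b) = μ b := by
  induction i with
  | zero => rfl
  | succ i ih => rw [pow_succ', Equiv.Perm.mul_apply, ← ih, ← Function.comp_apply (f := μ), hμ]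

namespace IsBlockPerm

variable {σ : Equiv.Perm (BlockIdx m)} {h : ℕ} (hσ : IsBlockPerm σ rep h)

include hσ

theorem strictMono_pow (i : ℕ) : StrictMono (σ ^ i) := by
  rw [Equiv.Perm.coe_pow]
  exact hσ.strictMono.iterate i

theorem fst_pow_eq_of_fst_eq (i : ℕ) {a c : BlockIdx m} (hac : a.1 = c.1) :
    ((σ ^ i) a).1 = ((σ ^ i) c).1 := by
  rcases lt_trichotomy_of_fst_eq hac with hlt | rfl | hlt
  · exact fst_eq_of_lt (hσ.strictMono_pow i hlt)
  · rfl
  · exact (fst_eq_of_lt (hσ.strictMono_pow i hlt)).symm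

theorem exists_pow_repIdx_eq (b : BlockIdx m) : ∃ (i : ℕ) (a : BlockIdx (m ∘ rep)), i < h ∧
    (σ ^ i) (repIdx m rep a) = b := by
  obtain ⟨⟨i, a⟩, rfl⟩ := hσ.bijective.2 b
  exact ⟨i, a, i.2, rfl⟩

theorem eq_of_comp_repIdx_eq {M : Type*} {μ ν : BlockIdx m → M} (hμ : μ ∘ σ = μ) (hν : ν ∘ σ = ν)
    (hμν : μ ∘ repIdx m rep = ν ∘ repIdx m rep) : μ = ν := by
  ext b
  obtain ⟨i, a, -, rfl⟩ := hσ.exists_pow_repIdx_eq b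
  rw [apply_pow_of_comp_eq hμ, apply_pow_of_comp_eq hν]
  exact congrFun hμν a

theorem prod_pow_eq [Fintype K] [Fintype κ] {R : Type*} [CommMonoid R] (x : BlockIdx m → R)
    {μ : BlockIdx m → ℕ} (hμ : μ ∘ σ = μ) :
    ∏ b, x b ^ μ b = ∏ a : BlockIdx (m ∘ rep),
      (∏ i ∈ Finset.range h, x ((σ ^ i) (repIdx m rep a))) ^ μ (repIdx m rep a) := by
  rw [← (Equiv.ofBijective _ hσ.bijective).prod_comp, Fintype.prod_prod_type_right]
  refine Finset.prod_congr rfl fun a _ => ?_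
  simp only [Equiv.ofBijective_apply, apply_pow_of_comp_eq hμ, Finset.prod_pow, Finset.prod_range]

variable [NeZero h]

theorem injective_repIdx : Function.Injective (repIdx m rep) := fun a c hac =>
  congrArg Prod.snd (hσ.bijective.1 (a₁ := (0, a)) (a₂ := (0, c)) (by simpa using hac))

theorem pow_repIdx_ne {i : ℕ} (hi : i ≠ 0) (hih : i < h) (a c : BlockIdx (m ∘ rep)) :
    (σ ^ i) (repIdx m rep a) ≠ repIdx m rep c := fun hac =>
  hi (congrArg (Fin.val ∘ Prod.fst)
    (hσ.bijective.1 (a₁ := (⟨i, hih⟩, a)) (a₂ := (0, c)) (by simpa using hac)))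

theorem extend_pow_repIdx {R : Type*} [One R] (x : BlockIdx (m ∘ rep) → R) {i : ℕ} (hi : i ≠ 0)
    (hih : i < h) (a : BlockIdx (m ∘ rep)) :
    Function.extend (repIdx m rep) x 1 ((σ ^ i) (repIdx m rep a)) = 1 :=
  Function.extend_apply' _ _ _ fun ⟨c, hc⟩ => hσ.pow_repIdx_ne hi hih a c hc.symm

/-- The extension of a permutation of the chosen blocks to a permutation commuting with `σ`. -/
noncomputable def lift (w : Equiv.Perm (BlockIdx (m ∘ rep))) : Equiv.Perm (BlockIdx m) :=
  (Equiv.ofBijective _ hσ.bijective).permCongr ((Equiv.refl _).prodCongr w)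

theorem lift_pow_repIdx (w : Equiv.Perm (BlockIdx (m ∘ rep))) (i : ℕ) (a : BlockIdx (m ∘ rep)) :
    hσ.lift w ((σ ^ i) (repIdx m rep a)) = (σ ^ i) (repIdx m rep (w a)) := by
  rw [pow_eq_pow_mod i hσ.pow_eq_one]
  let q : Fin h × BlockIdx (m ∘ rep) := (⟨i % h, Nat.mod_lt i (NeZero.pos h)⟩, a)
  have hq : (Equiv.ofBijective _ hσ.bijective) q = (σ ^ (i % h)) (repIdx m rep a) := rfl
  rw [← hq, lift, Equiv.permCongr_apply, Equiv.symm_apply_apply]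
  rfl

theorem commute_lift (w : Equiv.Perm (BlockIdx (m ∘ rep))) : Commute (hσ.lift w) σ := by
  ext1 b
  obtain ⟨i, a, -, rfl⟩ := hσ.exists_pow_repIdx_eq b
  have apply_pow (c : BlockIdx m) : σ ((σ ^ i) c) = (σ ^ (i + 1)) c := by
    rw [pow_succ', Equiv.Perm.mul_apply]
  rw [Equiv.Perm.mul_apply, Equiv.Perm.mul_apply, apply_pow, lift_pow_repIdx, lift_pow_repIdx,
    apply_pow]

theorem fst_lift {w : Equiv.Perm (BlockIdx (m ∘ rep))} (hw : ∀ a, (w a).1 = a.1) (b : BlockIdx m) :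
    (hσ.lift w b).1 = b.1 := by
  obtain ⟨i, a, -, rfl⟩ := hσ.exists_pow_repIdx_eq b
  rw [lift_pow_repIdx]
  exact hσ.fst_pow_eq_of_fst_eq i (congrArg rep (hw a))

theorem extend_comp_lift {R : Type*} [One R] (w : Equiv.Perm (BlockIdx (m ∘ rep)))
    (x : BlockIdx (m ∘ rep) → R) :
    Function.extend (repIdx m rep) x 1 ∘ hσ.lift w = Function.extend (repIdx m rep) (x ∘ w) 1 := by
  ext b
  obtain ⟨i, a, hi, rfl⟩ := hσ.exists_pow_repIdx_eq b
  rw [Function.comp_apply, lift_pow_repIdx]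
  rcases eq_or_ne i 0 with rfl | hi0
  · simp only [pow_zero, Equiv.Perm.one_apply, hσ.injective_repIdx.extend_apply,
      Function.comp_apply]
  · rw [hσ.extend_pow_repIdx _ hi0 hi, hσ.extend_pow_repIdx _ hi0 hi]

end IsBlockPerm

end BlockPerm

section PermStabilizer

variable {I B K 𝕜 : Type*} [Fintype I] [DecidableEq I] [Fintype B] [DecidableEq B] [Fintype K]
  [DecidableEq K] [Field 𝕜] {m : K → ℕ}

theorem tensorPerm_mem_stabilizer {σ : Equiv.Perm (BlockIdx m)} (hσ : StrictMono σ)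
    {v : (I → BlockIdx m) → 𝕜} (hfix : (tensorPerm I 𝕜 σ).mulVec v = v) :
    tensorPerm I 𝕜 σ ∈ stabilizer (descendantSpan v) :=
  mem_stabilizer_span fun u hu => Submodule.subset_span <| by
    induction hu with
    | refl => exact hfix.symm ▸ .refl
    | lower _ hca ih =>
      rw [Matrix.mulVec_mulVec, tensorPerm_mul_elemOp, ← Matrix.mulVec_mulVec]
      exact IsDescendant.lower ih (hσ hca)

theorem IsWeightVec.comp_perm_eq [CharZero 𝕜] {ω : B → ℤ} {u : (I → B) → 𝕜}
    (h : IsWeightVec ω u) (hu : u ≠ 0) {σ : Equiv.Perm B}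
    (hfix : (tensorPerm I 𝕜 σ).mulVec u = u) : ω ∘ σ = ω := by
  ext a
  have hcomm := congrArg (Matrix.mulVec · u) (tensorPerm_mul_elemOp (I := I) (R := 𝕜) σ a a)
  simp only [← Matrix.mulVec_mulVec, hfix, h a, h (σ a), Matrix.mulVec_smul] at hcomm
  exact_mod_cast (smul_left_injective 𝕜 hu hcomm).symm

theorem diagonal_mem_blockDiagonal (x : BlockIdx m → 𝕜) :
    Matrix.diagonal x ∈ blockDiagonal m 𝕜 := fun _ _ hac =>
  Matrix.diagonal_apply_ne _ fun h => hac (congrArg _ h)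

theorem IsHighestWeightVec.tensorPerm_mem_stabilizer [CharZero 𝕜] {lam : BlockIdx m → ℕ}
    {v : (I → BlockIdx m) → 𝕜} (hv : IsHighestWeightVec lam v) {w : Equiv.Perm (BlockIdx m)}
    (hw : ∀ a, (w a).1 = a.1) : tensorPerm I 𝕜 w ∈ stabilizer (descendantSpan v) := by
  rw [tensorPerm_eq]
  refine hv.tensorPower_mem_stabilizer fun a c hac => ?_
  rw [Equiv.Perm.permMatrix, PEquiv.toMatrix_apply, if_neg]
  intro h
  obtain rfl := Equiv.Perm.inv_eq_iff_eq.1 (Option.mem_some_iff.1 h)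
  exact hac (hw c)

theorem subTrace_weightProj_mul_tensorPerm {S : Submodule 𝕜 ((I → B) → 𝕜)} {σ : Equiv.Perm B}
    {μ : B → ℕ} (hP : weightProj I 𝕜 μ ∈ stabilizer S) (hT : tensorPerm I 𝕜 σ ∈ stabilizer S)
    (hμ : μ ∘ σ ≠ μ) : subTrace S (weightProj I 𝕜 μ * tensorPerm I 𝕜 σ) = 0 := by
  have hidem : weightProj I 𝕜 μ * weightProj I 𝕜 μ = weightProj I 𝕜 μ := by
    rw [weightProj_mul_weightProj, if_pos rfl]
  rw [← hidem, mul_assoc, subTrace_mul_comm hP (mul_mem hP hT), weightProj_mul_tensorPerm,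
    mul_assoc, weightProj_mul_weightProj, if_neg hμ, mul_zero, map_zero]

theorem commute_tensorPerm_sum_elemOp {σ : Equiv.Perm B} {h : ℕ} (hσ : σ ^ h = 1) (a c : B) :
    Commute (tensorPerm I 𝕜 σ) (∑ i ∈ Finset.range h, elemOp I 𝕜 ((σ ^ i) a) ((σ ^ i) c)) := by
  have hshift : ∑ i ∈ Finset.range h, elemOp I 𝕜 ((σ ^ (i + 1)) a) ((σ ^ (i + 1)) c) =
      ∑ i ∈ Finset.range h, elemOp I 𝕜 ((σ ^ i) a) ((σ ^ i) c) := by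
    refine add_right_cancel (b := elemOp I 𝕜 ((σ ^ 0) a) ((σ ^ 0) c)) ?_
    rw [← Finset.sum_range_succ' fun i => elemOp I 𝕜 ((σ ^ i) a) ((σ ^ i) c),
      Finset.sum_range_succ, hσ, pow_zero]
  rw [commute_iff_eq]
  simp only [Finset.mul_sum, tensorPerm_mul_elemOp, ← Equiv.Perm.mul_apply, ← pow_succ',
    ← Finset.sum_mul]
  rw [hshift]

theorem IsBlockPerm.commute_tensorPower_diagonal_mul_elemOp {κ : Type*} {rep : κ → K}
    {σ : Equiv.Perm (BlockIdx m)} {h : ℕ} [NeZero h] (hσ : IsBlockPerm σ rep h)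
    (x : BlockIdx (m ∘ rep) → 𝕜) (a c : BlockIdx (m ∘ rep)) :
    Commute (tensorPower I (Matrix.diagonal (Function.extend (repIdx m rep) x 1)) *
        elemOp I 𝕜 (repIdx m rep c) (repIdx m rep a))
      (∑ i ∈ (Finset.range h).erase 0,
        elemOp I 𝕜 ((σ ^ i) (repIdx m rep a)) ((σ ^ i) (repIdx m rep c))) := by
  refine Commute.sum_right _ _ _ fun i hi => ?_
  obtain ⟨hi0, hih⟩ := Finset.mem_erase.1 hi
  rw [Finset.mem_range] at hih
  refine Commute.mul_left ?_
    (commute_elemOp (hσ.pow_repIdx_ne hi0 hih a a).symm (hσ.pow_repIdx_ne hi0 hih c c))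
  have hD := smul_tensorPower_diagonal_mul_elemOp (I := I) (Function.extend (repIdx m rep) x 1)
    ((σ ^ i) (repIdx m rep a)) ((σ ^ i) (repIdx m rep c))
  rwa [hσ.extend_pow_repIdx x hi0 hih, hσ.extend_pow_repIdx x hi0 hih, one_smul, one_smul] at hD

end PermStabilizer

section TwistedChar

variable {I K κ 𝕜 : Type*} [Fintype I] [DecidableEq I] [Fintype K] [DecidableEq K] [Fintype κ]
  [Field 𝕜] {m : K → ℕ} {rep : κ → K} {σ : Equiv.Perm (BlockIdx m)} {h : ℕ}
  {lam : BlockIdx m → ℕ} {v : (I → BlockIdx m) → 𝕜}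

/-- The trace of `D ∘ σ` on the module generated by `v`, as a polynomial in the eigenvalues of `D`
on the blocks chosen by `rep`; the other eigenvalues are set to `1`. -/
noncomputable def twistedChar (rep : κ → K) (σ : Equiv.Perm (BlockIdx m))
    (v : (I → BlockIdx m) → 𝕜) : MvPolynomial (BlockIdx (m ∘ rep)) 𝕜 :=
  weightChar (descendantSpan v) (repIdx m rep) (tensorPerm I 𝕜 σ)

/-- The analogue of `twistedChar` for `E_ac E_ca σ` in place of `σ`. -/
noncomputable def rootTwistedChar (rep : κ → K) (σ : Equiv.Perm (BlockIdx m))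
    (v : (I → BlockIdx m) → 𝕜) (a c : BlockIdx (m ∘ rep)) : MvPolynomial (BlockIdx (m ∘ rep)) 𝕜 :=
  weightChar (descendantSpan v) (repIdx m rep) (elemOp I 𝕜 (repIdx m rep a) (repIdx m rep c) *
    elemOp I 𝕜 (repIdx m rep c) (repIdx m rep a) * tensorPerm I 𝕜 σ)

variable [CharZero 𝕜] (hσ : IsBlockPerm σ rep h) (hv : IsHighestWeightVec lam v)
  (hfix : (tensorPerm I 𝕜 σ).mulVec v = v)

include hσ hv hfix

theorem subTrace_eq_eval_twistedChar (x : BlockIdx m → 𝕜) :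
    subTrace (descendantSpan v) (tensorPower I (Matrix.diagonal x) * tensorPerm I 𝕜 σ) =
      eval (fun a => ∏ i ∈ Finset.range h, x ((σ ^ i) (repIdx m rep a)))
        (twistedChar rep σ v) := by
  rw [twistedChar, weightChar_apply, tensorPower_diagonal_eq_sum_weightProj, Finset.sum_mul,
    map_sum, map_sum]
  refine Finset.sum_congr rfl fun μ _ => ?_
  rw [smul_mul_assoc, map_smul, smul_eq_mul, eval_monomial]
  by_cases hμ : μ ∘ σ = μ
  · rw [hσ.prod_pow_eq x hμ, mul_comm, Finsupp.prod_fintype _ _ fun _ => pow_zero _]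
    rfl
  · rw [subTrace_weightProj_mul_tensorPerm (hv.weightProj_mem_stabilizer μ)
      (tensorPerm_mem_stabilizer hσ.strictMono hfix) hμ, mul_zero, zero_mul]

theorem laplacian_twistedChar : ∃ z : 𝕜,
    laplacian (twistedChar rep σ v) + ∑ a, ∑ c ∈ Finset.Ioi a,
      (rootTwistedChar rep σ v a c + rootTwistedChar rep σ v c a) =
      C z * twistedChar rep σ v := by
  choose z hz using hv.exists_blockCasimir_mulVec_eq_smul
  have hcas (k : K) : weightChar (descendantSpan v) (repIdx m rep)
      (blockCasimir I 𝕜 m k * tensorPerm I 𝕜 σ) = C (z k) * twistedChar rep σ v := by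
    rw [twistedChar, C_mul', ← map_smul, weightChar_apply, weightChar_apply]
    refine Finset.sum_congr rfl fun μ _ => congrArg _ (subTrace_mul_congr _ fun u hu => ?_)
    rw [← Matrix.mulVec_mulVec, hz k _ (tensorPerm_mem_stabilizer hσ.strictMono hfix u hu),
      Matrix.smul_mulVec]
  refine ⟨∑ k, z (rep k), ?_⟩
  have hlap : laplacian (twistedChar rep σ v) = ∑ a, rootTwistedChar rep σ v a a := by
    simp only [laplacian_apply, twistedChar, rootTwistedChar, euler_weightChar, mul_assoc]
  rw [hlap, map_sum, Finset.sum_mul]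
  simp only [← hcas, blockCasimir, Finset.sum_mul, map_sum]
  exact (sum_sameBlock_eq (rootTwistedChar rep σ v)).symm

variable [NeZero h]

theorem isMonicAt_twistedChar :
    IsMonicAt (twistedChar rep σ v) (Finsupp.equivFunOnFinite.symm (lam ∘ repIdx m rep)) where
  isDominatedBy ν hν y hy := by
    rw [twistedChar, coeff_weightChar] at hν
    obtain ⟨μ, -, hμ⟩ := Finset.exists_ne_zero_of_sum_ne_zero hν
    obtain ⟨rfl, htrace⟩ := ite_ne_right_iff.1 hμ
    have sum_extend (ν : BlockIdx m → ℕ) : ∑ b, Function.extend (repIdx m rep) y 0 b * (ν b : ℤ) =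
        ∑ a, y a * (ν (repIdx m rep a) : ℤ) := by
      refine (Fintype.sum_of_injective _ hσ.injective_repIdx _ _ (fun b hb => ?_) fun a => ?_).symm
      · rw [Function.extend_apply' _ _ _ hb, Pi.zero_apply, zero_mul]
      · rw [hσ.injective_repIdx.extend_apply]
    by_contra! hlt
    refine htrace ?_
    rw [subTrace_mul_comm (hv.weightProj_mem_stabilizer μ)
      (tensorPerm_mem_stabilizer hσ.strictMono hfix), subTrace_mul_congr (A' := 0), mul_zero,
      map_zero]
    intro u hu
    rw [Matrix.zero_mulVec]
    refine hv.weightProj_mulVec_eq_zero (antitone_extend_repIdx hσ.injective_repIdx hy) ?_ hu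
    rw [sum_extend, sum_extend]
    exact hlt
  coeff_eq_one := by
    have hlam : lam ∘ σ = lam := by
      have := hv.weight.comp_perm_eq hv.ne_zero hfix
      exact funext fun a => Nat.cast_injective (R := ℤ) (congrFun this a)
    rw [twistedChar, coeff_weightChar, Finset.sum_eq_single lam, if_pos rfl]
    · refine subTrace_eq_one_of_forall_mem_span_singleton (mem_descendantSpan_self v) hv.ne_zero
        ?_ fun u hu => ?_
      · rw [← Matrix.mulVec_mulVec, hfix, hv.weightProj_mulVec_self]
      · rw [← Matrix.mulVec_mulVec]
        exact hv.weightProj_mulVec_mem_span (tensorPerm_mem_stabilizer hσ.strictMono hfix u hu)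
    · intro μ _ hμ
      refine ite_eq_right_iff.2 fun hμlam => subTrace_weightProj_mul_tensorPerm
        (hv.weightProj_mem_stabilizer μ) (tensorPerm_mem_stabilizer hσ.strictMono hfix) ?_
      exact fun hμσ => hμ (hσ.eq_of_comp_repIdx_eq hμσ hlam
        (Finsupp.equivFunOnFinite.symm.injective hμlam))
    · exact fun hlam => absurd (hv.weight.mem_weights hv.ne_zero) hlam

/-- `E_ac` passes through `D` with the factor `x_a / x_c`, then cyclically around the trace, and
through `σ` up to the operators `E_{σⁱ a, σⁱ c}` with `0 < i < h`, which commute with `D E_ca`. -/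
theorem X_mul_rootTwistedChar {a c : BlockIdx (m ∘ rep)} (hac : a.1 = c.1) :
    X c * rootTwistedChar rep σ v a c = X a * rootTwistedChar rep σ v c a := by
  refine MvPolynomial.funext fun x => ?_
  simp only [rootTwistedChar, map_mul (eval x), eval_X, eval_weightChar hσ.injective_repIdx,
    mul_assoc]
  have hac' : (repIdx m rep a).1 = (repIdx m rep c).1 := congrArg rep hac
  have hcyc := smul_tensorPower_diagonal_mul_elemOp (I := I) (Function.extend (repIdx m rep) x 1)
    (repIdx m rep a) (repIdx m rep c)
  rw [hσ.injective_repIdx.extend_apply, hσ.injective_repIdx.extend_apply] at hcyc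
  have hsum := commute_tensorPerm_sum_elemOp (I := I) (𝕜 := 𝕜) hσ.pow_eq_one (repIdx m rep a)
    (repIdx m rep c)
  rw [← Finset.add_sum_erase _ _ (Finset.mem_range.2 (NeZero.pos h))] at hsum
  set D := tensorPower I (Matrix.diagonal (Function.extend (repIdx m rep) x 1))
  have hDmem : D ∈ stabilizer (descendantSpan v) :=
    hv.tensorPower_mem_stabilizer (diagonal_mem_blockDiagonal _)
  have hTmem := tensorPerm_mem_stabilizer hσ.strictMono hfix
  have hE := hv.elemOp_mem_stabilizer hac'
  have hE' := hv.elemOp_mem_stabilizer hac'.symm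
  rw [← mul_assoc D, ← smul_eq_mul, ← map_smul, ← smul_mul_assoc, hcyc, smul_mul_assoc, map_smul,
    smul_eq_mul, mul_assoc, subTrace_mul_comm hE (mul_mem hDmem (mul_mem hE' hTmem))]
  congr 1
  simp only [mul_assoc]
  rw [← mul_assoc D, ← mul_assoc D]
  exact subTrace_mul_mul_comm_of_commute_add (mul_mem hDmem hE') hTmem
    (sum_mem fun i _ => hv.elemOp_mem_stabilizer (hσ.fst_pow_eq_of_fst_eq i hac')) hsum
    (hσ.commute_tensorPower_diagonal_mul_elemOp x a c)

theorem rename_twistedChar {w : Equiv.Perm (BlockIdx (m ∘ rep))} (hw : ∀ a, (w a).1 = a.1) :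
    rename w (twistedChar rep σ v) = twistedChar rep σ v := by
  refine MvPolynomial.funext fun x => ?_
  rw [eval_rename, twistedChar, eval_weightChar hσ.injective_repIdx,
    eval_weightChar hσ.injective_repIdx, ← hσ.extend_comp_lift]
  set D := tensorPower I (Matrix.diagonal (Function.extend (repIdx m rep) x 1)) with hD
  have hconj : tensorPower I (Matrix.diagonal (Function.extend (repIdx m rep) x 1 ∘ hσ.lift w)) =
      tensorPerm I 𝕜 (hσ.lift w)⁻¹ * (D * tensorPerm I 𝕜 (hσ.lift w)) := by
    rw [hD, tensorPower_diagonal_mul_tensorPerm, ← mul_assoc, ← map_mul, inv_mul_cancel, map_one,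
      one_mul]
  have hDmem : D ∈ stabilizer (descendantSpan v) :=
    hv.tensorPower_mem_stabilizer (diagonal_mem_blockDiagonal _)
  have hTmem := tensorPerm_mem_stabilizer hσ.strictMono hfix
  have hW := hv.tensorPerm_mem_stabilizer (hσ.fst_lift hw)
  have hW' : tensorPerm I 𝕜 (hσ.lift w)⁻¹ ∈ stabilizer (descendantSpan v) :=
    hv.tensorPerm_mem_stabilizer fun b => by
      rw [← hσ.fst_lift hw, ← Equiv.Perm.mul_apply, mul_inv_cancel, Equiv.Perm.one_apply]
  rw [hconj, mul_assoc, subTrace_mul_comm hW' (mul_mem (mul_mem hDmem hW) hTmem), mul_assoc,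
    mul_assoc, ← map_mul, ← map_mul, ← mul_assoc, (hσ.commute_lift w).eq, mul_inv_cancel_right]

theorem X_sub_X_mul_rootTwistedChar {a c : BlockIdx (m ∘ rep)} (hac : a.1 = c.1) :
    (X a - X c) * (rootTwistedChar rep σ v a c + rootTwistedChar rep σ v c a) =
      (X a + X c) * (euler a (twistedChar rep σ v) - euler c (twistedChar rep σ v)) := by
  have hbracket := elemOp_mul_sub_mul (I := I) (R := 𝕜) (repIdx m rep a) (repIdx m rep c)
    (repIdx m rep c) (repIdx m rep a)
  rw [if_pos rfl, if_pos rfl] at hbracket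
  have heuler : euler a (twistedChar rep σ v) - euler c (twistedChar rep σ v) =
      rootTwistedChar rep σ v a c - rootTwistedChar rep σ v c a := by
    simp only [twistedChar, rootTwistedChar, euler_weightChar]
    rw [← map_sub, ← sub_mul, ← hbracket, sub_mul, map_sub]
  rw [heuler]
  linear_combination (-2) * X_mul_rootTwistedChar hσ hv hfix hac

theorem twistedChar_mul_alternant (hlam : Antitone lam) :
    twistedChar rep σ v * alternant 𝕜 (staircase (m ∘ rep)) =
      alternant 𝕜 (Finsupp.equivFunOnFinite.symm (lam ∘ repIdx m rep) + staircase (m ∘ rep)) := by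
  obtain ⟨z, hz⟩ := laplacian_twistedChar hσ hv hfix
  refine mul_alternant_staircase (hlam.comp_monotone strictMono_repIdx.monotone)
    (isMonicAt_twistedChar hσ hv hfix) (fun a c hac => rename_twistedChar hσ hv hfix fun b => ?_)
    _ (fun a c hac => X_sub_X_mul_rootTwistedChar hσ hv hfix (fst_eq_of_lt hac)) hz
  rw [Equiv.swap_apply_def]
  split_ifs with hba hbc
  · rw [hba, fst_eq_of_lt hac]
  · rw [hbc, fst_eq_of_lt hac]
  · rfl

theorem twistedChar_eq_prod_det (hlam : Antitone lam) :
    twistedChar rep σ v = ∏ k : κ, (Matrix.of fun i j : Fin (m (rep k)) =>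
      completeHom (fun l : Fin (m (rep k)) => (X ⟨k, l⟩ : MvPolynomial (BlockIdx (m ∘ rep)) 𝕜))
        ((lam ⟨rep k, i⟩ : ℤ) + j - i)).det := by
  refine mul_right_cancel₀ (b := alternant 𝕜 (staircase (m ∘ rep))) ?_ ?_
  · have := (isMonicAt_alternant (R := 𝕜) (strictAnti_staircase (N := m ∘ rep))).coeff_eq_one
    rintro hzero
    rw [hzero, coeff_zero] at this
    exact zero_ne_one this
  · rw [twistedChar_mul_alternant hσ hv hfix hlam, alternant, alternant, ← Finset.prod_mul_distrib]
    exact Finset.prod_congr rfl fun k _ =>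
      jacobiTrudi (fun l : Fin (m (rep k)) => (X ⟨k, l⟩ : MvPolynomial (BlockIdx (m ∘ rep)) 𝕜))
        fun i => lam ⟨rep k, i⟩

theorem subTrace_tensorPower_diagonal_mul_tensorPerm (hlam : Antitone lam)
    (x : BlockIdx m → 𝕜) :
    subTrace (descendantSpan v) (tensorPower I (Matrix.diagonal x) * tensorPerm I 𝕜 σ) =
      ∏ k : κ, (Matrix.of fun i j : Fin (m (rep k)) =>
        completeHom (fun l => ∏ i ∈ Finset.range h, x ((σ ^ i) ⟨rep k, l⟩))
          ((lam ⟨rep k, i⟩ : ℤ) + j - i)).det := by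
  rw [subTrace_eq_eval_twistedChar hσ hv hfix, twistedChar_eq_prod_det hσ hv hfix hlam, map_prod]
  refine Finset.prod_congr rfl fun k _ => ?_
  rw [RingHom.map_det]
  congr 1
  ext i j
  simp only [RingHom.mapMatrix_apply, Matrix.map_apply, Matrix.of_apply, map_completeHom]
  congr 1
  exact funext fun l => eval_X _

end TwistedChar

/-! ### The translates of a fundamental domain in `ℤ/eℤ` -/

section Translates

variable {e p d : ℕ} [NeZero e] (he : e = p * d) (j : ℕ)

include he

theorem esys_eq_gcd_mul : Esys p d j = p.gcd j * d := by
  have hp : p ≠ 0 := fun h => NeZero.ne e (by rw [he, h, zero_mul])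
  rw [Esys, hOrd, ZMod.addOrderOf_coe j hp,
    Nat.div_div_self (Nat.gcd_dvd_left p j) hp]

theorem hOrd_mul_esys : hOrd p j * Esys p d j = e := by
  have hp : p ≠ 0 := fun h => NeZero.ne e (by rw [he, h, zero_mul])
  rw [esys_eq_gcd_mul he, hOrd, ZMod.addOrderOf_coe j hp, ← mul_assoc,
    Nat.div_mul_cancel (Nat.gcd_dvd_left p j), he]

theorem addOrderOf_natCast_mul : addOrderOf ((j * d : ℕ) : ZMod e) = hOrd p j := by
  have hp : p ≠ 0 := fun h => NeZero.ne e (by rw [he, h, zero_mul])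
  have hd : 0 < d := Nat.pos_of_ne_zero fun h => NeZero.ne e (by rw [he, h, mul_zero])
  rw [hOrd, ZMod.addOrderOf_coe j hp, ZMod.addOrderOf_coe _ (NeZero.ne e), he,
    Nat.gcd_mul_right, Nat.mul_div_mul_right _ _ hd]

theorem bijective_natCast_add_mul_mul :
    Function.Bijective fun q : Fin (hOrd p j) × Fin (Esys p d j) =>
      ((q.2 : ℕ) : ZMod e) + ((q.1 : ℕ) : ZMod e) * ((j * d : ℕ) : ZMod e) := by
  rw [Fintype.bijective_iff_injective_and_card]
  refine ⟨?_, by simp only [Fintype.card_prod, Fintype.card_fin, ZMod.card, hOrd_mul_esys he]⟩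
  rintro ⟨i, k⟩ ⟨i', k'⟩ heq
  have hdvd (i : ℕ) : i * (j * d) ≡ 0 [MOD Esys p d j] := by
    rw [esys_eq_gcd_mul he]
    exact Nat.modEq_zero_iff_dvd.2 ((Nat.mul_dvd_mul_right (Nat.gcd_dvd_right p j) d).mul_left i)
  have hk : k = k' := by
    have hmod : (k : ℕ) + i * (j * d) ≡ k' + i' * (j * d) [MOD Esys p d j] :=
      ((ZMod.natCast_eq_natCast_iff _ _ e).1 (by exact_mod_cast heq)).of_dvd
        (Dvd.intro_left _ (hOrd_mul_esys he j))
    exact Fin.ext (Nat.ModEq.eq_of_lt_of_lt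
      (((Nat.ModEq.refl _).add (hdvd i).symm).trans
        (hmod.trans ((Nat.ModEq.refl _).add (hdvd i')))) k.2 k'.2)
  subst hk
  have hi : (i : ℕ) • ((j * d : ℕ) : ZMod e) = (i' : ℕ) • ((j * d : ℕ) : ZMod e) := by
    rw [nsmul_eq_mul, nsmul_eq_mul]
    exact add_left_cancel heq
  have hlt (i : Fin (hOrd p j)) : (i : ℕ) < addOrderOf ((j * d : ℕ) : ZMod e) :=
    (addOrderOf_natCast_mul he j).symm ▸ i.2
  rw [Fin.ext ((nsmul_eq_nsmul_iff_modEq.1 hi).eq_of_lt_of_lt (hlt i) (hlt i'))]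

end Translates

/-! ### The automorphism `τ` -/

section Tau

variable {e d : ℕ} [NeZero e] {m : ZMod e → ℕ}

theorem blockIdx_ext {K : Type*} {m : K → ℕ} {a c : BlockIdx m} (hfst : a.1 = c.1)
    (hsnd : (a.2 : ℕ) = c.2) : a = c :=
  Sigma.ext hfst ((Fin.heq_ext_iff (congrArg m hfst)).2 hsnd)

theorem blockIdx_lt_iff {K : Type*} {m : K → ℕ} {a c : BlockIdx m} :
    a < c ↔ a.1 = c.1 ∧ (a.2 : ℕ) < c.2 := by
  obtain ⟨k, i⟩ := a
  obtain ⟨l, i'⟩ := c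
  refine ⟨fun h => ?_, ?_⟩
  · obtain rfl := fst_eq_of_lt h
    exact ⟨rfl, Sigma.mk_lt_mk_iff.1 h⟩
  · rintro ⟨rfl : k = l, h⟩
    exact Sigma.mk_lt_mk_iff.2 h

variable (hm : ∀ k, m (k + (d : ZMod e)) = m k)

omit [NeZero e] in
include hm in
theorem periodic_natCast_mul (j i : ℕ) :
    Function.Periodic m ((i : ZMod e) * ((j * d : ℕ) : ZMod e)) := by
  rw [Nat.cast_mul]
  exact (Function.Periodic.nat_mul hm j).nat_mul i

/-- The permutation of the basis of `V` induced by `τ`. -/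
def tauPerm : Equiv.Perm (BIdx e m) :=
  (Equiv.addRight (d : ZMod e)).sigmaCongr fun k => finCongr (hm k).symm

theorem fst_tauPerm_pow (i : ℕ) (b : BIdx e m) : ((tauPerm hm ^ i) b).1 = b.1 + i * d := by
  induction i with
  | zero => simp
  | succ i ih =>
    rw [pow_succ', Equiv.Perm.mul_apply, Nat.cast_succ, add_one_mul, ← add_assoc, ← ih]
    rfl

theorem snd_tauPerm_pow (i : ℕ) (b : BIdx e m) : (((tauPerm hm ^ i) b).2 : ℕ) = b.2 := by
  induction i with
  | zero => rfl
  | succ i ih =>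
    rw [pow_succ', Equiv.Perm.mul_apply, ← ih]
    rfl

theorem strictMono_tauPerm_pow (i : ℕ) : StrictMono (tauPerm hm ^ i : Equiv.Perm (BIdx e m)) :=
  fun a c hac => by
    obtain ⟨hfst, hsnd⟩ := blockIdx_lt_iff.1 hac
    exact blockIdx_lt_iff.2 ⟨by rw [fst_tauPerm_pow, fst_tauPerm_pow, hfst],
      by rwa [snd_tauPerm_pow, snd_tauPerm_pow]⟩

theorem isBlockPerm_tauPerm_pow {p : ℕ} (he : e = p * d) (j : ℕ) :
    IsBlockPerm (tauPerm hm ^ j) (fun k : Fin (Esys p d j) => ((k : ℕ) : ZMod e)) (hOrd p j) where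
  strictMono := strictMono_tauPerm_pow hm j
  pow_eq_one := by
    ext1 b
    rw [← pow_mul]
    refine blockIdx_ext ?_ (snd_tauPerm_pow hm _ b)
    rw [fst_tauPerm_pow, mul_comm j, Nat.cast_mul, mul_assoc, ← Nat.cast_mul j,
      ← nsmul_eq_mul, ← addOrderOf_natCast_mul he j, addOrderOf_nsmul_eq_zero, add_zero]
    rfl
  bijective := by
    have hfst (i : ℕ) (b : BIdx e m) :
        (((tauPerm hm ^ j) ^ i) b).1 = b.1 + i * ((j * d : ℕ) : ZMod e) := by
      rw [← pow_mul, fst_tauPerm_pow]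
      push_cast
      ring
    have hsnd (i : ℕ) (b : BIdx e m) : ((((tauPerm hm ^ j) ^ i) b).2 : ℕ) = b.2 := by
      rw [← pow_mul, snd_tauPerm_pow]
    have hbij := bijective_natCast_add_mul_mul he j
    constructor
    · rintro ⟨i, ⟨k, l⟩⟩ ⟨i', ⟨k', l'⟩⟩ heq
      obtain ⟨rfl, rfl⟩ := Prod.ext_iff.1 <| hbij.1 (a₁ := (i, k)) (a₂ := (i', k')) <|
        (hfst i _).symm.trans ((congrArg Sigma.fst heq).trans (hfst i' _))
      have hl : (l : ℕ) = l' :=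
        (hsnd i _).symm.trans ((congrArg (fun b => (b.2 : ℕ)) heq).trans (hsnd i _))
      rw [Fin.ext hl]
    · rintro ⟨k, l⟩
      obtain ⟨⟨i, k'⟩, rfl⟩ := hbij.2 k
      refine ⟨⟨i, k', Fin.cast (periodic_natCast_mul hm j i _) l⟩, blockIdx_ext (hfst i _) ?_⟩
      exact hsnd i _

theorem tauMat_eq_tensorPerm (n : ℕ) : tauMat e n d m hm = tensorPerm (Fin n) ℂ (tauPerm hm) := by
  ext b' b
  simp only [tauMat, tensorPow, tauV, Matrix.of_apply, tensorPerm_apply, Finset.prod_ite_zero,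
    Finset.prod_const_one, Finset.mem_univ, true_imp_iff, funext_iff]
  rfl

theorem tensorPerm_tauPerm_pow_mulVec {n : ℕ} {v : TIdx e n m → ℂ} {c j : ℕ} (hcj : c ∣ j)
    (hv : (tauMat e n d m hm ^ c).mulVec v = v) :
    (tensorPerm (Fin n) ℂ (tauPerm hm ^ j)).mulVec v = v := by
  obtain ⟨q, rfl⟩ := hcj
  rw [map_pow, ← tauMat_eq_tensorPerm, pow_mul]
  induction q with
  | zero => rw [pow_zero, Matrix.one_mulVec]
  | succ q ih => rw [pow_succ, ← Matrix.mulVec_mulVec, hv, ih]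

end Tau

/-! ### Highest weight vectors -/

section HighestWeight

variable {e n : ℕ} [NeZero e] {m : ZMod e → ℕ} {β : ZMod e → Multiset ℕ} {v : TIdx e n m → ℂ}

theorem tensorPow_eq (g : Matrix (BIdx e m) (BIdx e m) ℂ) :
    tensorPow e n m g = tensorPower (Fin n) g := rfl

theorem mem_hwSubmodule_iff : v ∈ hwSubmodule e n m β ↔
    (∀ g, IsUpperUni e m g → (tensorPower (Fin n) g).mulVec v = v) ∧
      ∀ x, (tensorPower (Fin n) (Matrix.diagonal x)).mulVec v = weightOf e m β x • v := by
  simp only [hwSubmodule, Submodule.mem_inf, Submodule.mem_iInf, Module.End.mem_eigenspace_iff,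
    Matrix.mulVecLin_apply, one_smul, Set.mem_ofPred_eq, tensorPow_eq]

theorem isWeightVec_of_mem_hwSubmodule (hv : v ∈ hwSubmodule e n m β) :
    IsWeightVec (fun a => (lamOf (β a.1) a.2 : ℤ)) v := by
  have htorus (x : BIdx e m → ℂ) (b : TIdx e n m) :
      (∏ a, x a ^ count b a) * v b = weightOf e m β x * v b := by
    have hx := congrFun ((mem_hwSubmodule_iff.1 hv).2 x) b
    rwa [tensorPower_diagonal, Matrix.mulVec_diagonal, prod_comp_eq_prod_pow_count] at hx
  intro a
  ext b
  rw [elemOp_self, Matrix.mulVec_diagonal, Pi.smul_apply, smul_eq_mul, Int.cast_natCast]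
  by_cases hb : v b = 0
  · rw [hb, mul_zero, mul_zero]
  -- The torus element with entry `2` at `a` and `1` elsewhere detects the exponent at `a`.
  have htwo := mul_right_cancel₀ hb (htorus (Function.update 1 a 2) b)
  simp only [weightOf, Function.update_apply, Pi.one_apply, ite_pow, one_pow, Finset.prod_ite_eq',
    Finset.mem_univ, if_true] at htwo
  have hcount : count b a = lamOf (β a.1) a.2 :=
    Nat.pow_right_injective le_rfl (by exact_mod_cast htwo)
  rw [hcount]

theorem isUpperUni_one_add_smul_single {a c : BlockIdx m} (hac : a < c) (t : ℂ) :
    IsUpperUni e m (1 + t • Matrix.single a c 1) := by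
  refine ⟨fun b => ?_, fun b b' hne hnlt => ?_⟩
  · rw [Matrix.add_apply, Matrix.one_apply_eq, Matrix.smul_apply, Matrix.single_apply_of_ne,
      smul_zero, add_zero]
    rintro ⟨rfl, rfl⟩
    exact hac.false
  · rw [Matrix.add_apply, Matrix.one_apply_ne hne, Matrix.smul_apply, Matrix.single_apply_of_ne,
      smul_zero, add_zero]
    rintro ⟨rfl, rfl⟩
    exact hnlt (blockIdx_lt_iff.1 hac)

theorem isHighestWeightVec_of_mem_hwSubmodule (hv0 : v ≠ 0) (hv : v ∈ hwSubmodule e n m β) :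
    IsHighestWeightVec (fun a => lamOf (β a.1) a.2) v where
  ne_zero := hv0
  raising {a c} hac := by
    have hw := isWeightVec_of_mem_hwSubmodule hv
    have hmem : (elemOp (Fin n) ℂ a c).mulVec v ∈ Submodule.span ℂ {v} :=
      tensorDer_mulVec_mem_of_forall_tensorPower fun t => by
        rw [(mem_hwSubmodule_iff.1 hv).1 _ (isUpperUni_one_add_smul_single hac t)]
        exact Submodule.mem_span_singleton_self v
    -- `E_{ac} v` is a multiple of `v`, but its weight differs from that of `v`.
    obtain ⟨z, hz⟩ := Submodule.mem_span_singleton.1 hmem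
    by_contra hne
    obtain ⟨b, hb⟩ := Function.ne_iff.1 hne
    have hcount := (hw.elemOp_mulVec a c).count_eq hb a
    rw [← hz] at hb
    rw [hw.count_eq (right_ne_zero_of_mul hb)] at hcount
    simp only [Pi.sub_apply, Pi.add_apply, Pi.single_eq_same, Pi.single_eq_of_ne hac.ne] at hcount
    omega
  weight := isWeightVec_of_mem_hwSubmodule hv

theorem antitone_lamOf (μ : Multiset ℕ) : Antitone (lamOf μ) := by
  have hsorted : (μ.sort (· ≤ ·)).reverse.SortedGE :=
    (Multiset.pairwise_sort μ (· ≤ ·)).sortedLE.reverse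
  intro i j hij
  rw [lamOf, lamOf]
  obtain hj | hj := lt_or_ge j (μ.sort (· ≤ ·)).reverse.length
  · rw [List.getD_eq_getElem _ _ hj, List.getD_eq_getElem _ _ (hij.trans_lt hj)]
    exact hsorted.antitone_get (a := ⟨i, hij.trans_lt hj⟩) (b := ⟨j, hj⟩) hij
  · rw [List.getD_eq_default _ _ hj]
    exact Nat.zero_le _

theorem antitone_lamOf_blockIdx {K : Type*} {m : K → ℕ} (β : K → Multiset ℕ) :
    Antitone fun a : BlockIdx m => lamOf (β a.1) a.2 := fun a c hac => by
  obtain rfl | hlt := hac.eq_or_lt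
  · exact le_rfl
  · obtain ⟨hfst, hsnd⟩ := blockIdx_lt_iff.1 hlt
    simp only [hfst]
    exact antitone_lamOf _ hsnd.le

end HighestWeight

theorem traceOn_mulVecLin {T : Type*} [Fintype T] [DecidableEq T] {S : Submodule ℂ (T → ℂ)}
    {A : Matrix T T ℂ} (hA : A ∈ stabilizer S) : traceOn S A.mulVecLin = subTrace S A :=
  (dif_pos hA).trans (subTrace_eq_trace_restrict hA).symm

theorem Xvar_eq_prod_tauPerm {e p d j : ℕ} [NeZero e] {m : ZMod e → ℕ}
    (hm : ∀ k, m (k + (d : ZMod e)) = m k) (x : BIdx e m → ℂ) (k : ℕ) (l : Fin (m k)) :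
    Xvar e p d m x j k l =
      ∏ i ∈ Finset.range (hOrd p j), x (((tauPerm hm ^ j) ^ i) ⟨k, l⟩) := by
  refine Finset.prod_congr rfl fun i _ => ?_
  have hfst : (((tauPerm hm ^ j) ^ i) ⟨k, l⟩).1 = ((k + i * j * d : ℕ) : ZMod e) := by
    rw [← pow_mul, fst_tauPerm_pow]
    push_cast
    ring
  have hsnd : ((((tauPerm hm ^ j) ^ i) ⟨k, l⟩).2 : ℕ) = l := by
    rw [← pow_mul, snd_tauPerm_pow]
  have hl : (l : ℕ) < m ((k + i * j * d : ℕ) : ZMod e) := by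
    rw [← hsnd, ← hfst]
    exact Fin.is_lt _
  rw [xval, dif_pos hl]
  exact congrArg x (blockIdx_ext hfst.symm hsnd.symm)

theorem schurBrace_eq_prod_det {e p d j : ℕ} [NeZero e] {m : ZMod e → ℕ}
    (hm : ∀ k, m (k + (d : ZMod e)) = m k) (x : BIdx e m → ℂ) (β : ZMod e → Multiset ℕ) :
    schurBrace e p d m x j β = ∏ k : Fin (Esys p d j),
      (Matrix.of fun i i' : Fin (m (k : ℕ)) => completeHom
        (fun l => ∏ s ∈ Finset.range (hOrd p j), x (((tauPerm hm ^ j) ^ s) ⟨(k : ℕ), l⟩))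
        ((lamOf (β (k : ℕ)) i : ℤ) + i' - i)).det := by
  rw [schurBrace, sAlphaSys, Finset.prod_range]
  refine Finset.prod_congr rfl fun k _ => ?_
  rw [schurFin_eq_det_completeHom, braceF, if_pos k.2]
  simp only [vvX, ← Xvar_eq_prod_tauPerm]
  rfl

theorem statement3_general (e p d n : ℕ) [NeZero e] (hp : p ∣ e) (hd : d = e / p)
    (m : ZMod e → ℕ) (hm : ∀ k, m (k + (d : ZMod e)) = m k) (xv : BIdx e m → ℂ)
    (β : ZMod e → Multiset ℕ) (_hβ : IsEPartition e n β) (j : ℕ) (hcj : csize e d β ∣ j)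
    (v : TIdx e n m → ℂ) (hv0 : v ≠ 0) (hhw : v ∈ hwSubmodule e n m β)
    (hτ : Matrix.mulVecLin ((tauMat e n d m hm) ^ (csize e d β)) v = v)
    (S : Submodule ℂ (TIdx e n m → ℂ))
    (hS : S = Submodule.span ℂ
      {u | ∃ g, IsBlockDiag e m g ∧ IsUnit g ∧
        u = Matrix.mulVecLin (tensorPow e n m g) v}) :
    traceOn S (Matrix.mulVecLin (Dmat e n m xv * (tauMat e n d m hm) ^ j)) =
      schurBrace e p d m xv j β := by
  have he : e = p * d := hd ▸ (Nat.mul_div_cancel' hp).symm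
  have : NeZero (hOrd p j) := ⟨left_ne_zero_of_mul (hOrd_mul_esys he j ▸ NeZero.ne e)⟩
  have hv := isHighestWeightVec_of_mem_hwSubmodule hv0 hhw
  have hfix := tensorPerm_tauPerm_pow_mulVec hm hcj hτ
  have hσ := isBlockPerm_tauPerm_pow hm he j
  have hSv : S = descendantSpan v := hS.trans hv.span_tensorPower_eq_descendantSpan
  have hD : Dmat e n m xv = tensorPower (Fin n) (Matrix.diagonal xv) :=
    (tensorPower_diagonal xv).symm
  rw [hSv, hD, tauMat_eq_tensorPerm, ← map_pow, traceOn_mulVecLin,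
    subTrace_tensorPower_diagonal_mul_tensorPerm hσ hv hfix (antitone_lamOf_blockIdx β),
    schurBrace_eq_prod_det hm]
  exact mul_mem (hv.tensorPower_mem_stabilizer (diagonal_mem_blockDiagonal xv))
    (tensorPerm_mem_stabilizer hσ.strictMono hfix)

/-- formula (2.9.1).  Let `β ∈ 𝒫_{n,e}` with `c_{β,p} ∣ j`,
and let `V'_{β,1}` be the `G`-submodule of `V^{⊗n}` generated by a highest
weight vector `v` of weight `β` lying in `Z_{β,1}` (i.e. fixed by `τ^c`);
it is stable under `τ^j`.  Then `Tr(Dτ^j, V'_{β,1}) = s_{β{j}}(𝒳_j)`. -/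
theorem statement3 (e p d n : ℕ) [NeZero e] [NeZero n] (hp : p ∣ e) (hd : d = e / p)
    (ζ : ℂ) (hζ : IsPrimitiveRoot ζ e)
    (m : ZMod e → ℕ) (hmn : ∀ k, n ≤ m k) (hm : ∀ k, m (k + (d : ZMod e)) = m k)
    (xv : BIdx e m → ℂ) (hxv : ∀ bb, xv bb ≠ 0)
    (β : ZMod e → Multiset ℕ) (hβ : IsEPartition e n β)
    (j : ℕ) (hj : j < p) (hcj : csize e d β ∣ j)
    (v : TIdx e n m → ℂ) (hv0 : v ≠ 0)
    (hhw : v ∈ hwSubmodule e n m β)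
    (hτ : Matrix.mulVecLin ((tauMat e n d m hm) ^ (csize e d β)) v = v)
    (S : Submodule ℂ (TIdx e n m → ℂ))
    (hS : S = Submodule.span ℂ
      {u | ∃ g, IsBlockDiag e m g ∧ IsUnit g ∧
        u = Matrix.mulVecLin (tensorPow e n m g) v}) :
    traceOn S (Matrix.mulVecLin (Dmat e n m xv * (tauMat e n d m hm) ^ j)) =
      schurBrace e p d m xv j β :=
  statement3_general e p d n hp hd m hm xv β hβ j hcj v hv0 hhw hτ S hS

end GreenII
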